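/- arXiv:2105.08029 — 2 statements merged into one kernel-verified Lean document; each statement's English description precedes it below -/
import Mathlib

section
/- Let 1 < p < ∞, let ω be a radial weight in the class D̂, and let ν be a radial weight. If the Bergman projection P_ω is bounded on L^p_ν, then A_p(ω,ν) < ∞. -/
open MeasureTheory Set Metric
open scoped ENNReal NNReal

noncomputable section

/-- `ω̂(r) = ∫_r^1 ω(s) ds`. -/
def hatw (w : ℝ → ℝ) (r : ℝ) : ℝ := ∫ s in Set.Ioo r 1, w s

/-- `ω̂₁(r) = ∫_r^1 s ω(s) ds`. -/
def hat1 (w : ℝ → ℝ) (r : ℝ) : ℝ := ∫ s in Set.Ioo r 1, s * w s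

/-- A radial weight: nonnegative, integrable on `[0,1)`, with `ω̂(r) > 0` for `0 ≤ r < 1`. -/
def IsRadialWeight (w : ℝ → ℝ) : Prop :=
  (∀ r ∈ Set.Ico (0:ℝ) 1, 0 ≤ w r) ∧ MeasureTheory.IntegrableOn w (Set.Ico (0:ℝ) 1) ∧
    ∀ r ∈ Set.Ico (0:ℝ) 1, 0 < hatw w r

/-- The class `D̂`: `sup_{0 ≤ r < 1} ω̂(r)/ω̂((1+r)/2) < ∞`. -/
def Dhat (w : ℝ → ℝ) : Prop :=
  ∃ C : ℝ, ∀ r ∈ Set.Ico (0:ℝ) 1, hatw w r ≤ C * hatw w ((1 + r) / 2)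

/-- The odd moment `ω_{2n+1} = ∫₀¹ r^{2n+1} ω(r) dr`. -/
def moment (w : ℝ → ℝ) (n : ℕ) : ℝ := ∫ r in Set.Ioo (0:ℝ) 1, r ^ (2 * n + 1) * w r

/-- The Bergman reproducing kernel `B_z^ω(ζ) = Σ_n (conj z · ζ)^n / (2 ω_{2n+1})`. -/
def Bker (w : ℝ → ℝ) (z ζ : ℂ) : ℂ :=
  ∑' n : ℕ, ((starRingEnd ℂ) z * ζ) ^ n / ((2 * moment w n : ℝ) : ℂ)

/-- The `L^p_ν` norm (with `dA` = area measure divided by `π`) of a complex-valued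
function on the unit disc. -/
def LpC (p : ℝ) (v : ℝ → ℝ) (f : ℂ → ℂ) : ℝ≥0∞ :=
  ((∫⁻ z in Metric.ball (0:ℂ) 1, ENNReal.ofReal (‖f z‖ ^ p * v ‖z‖)) /
    ENNReal.ofReal Real.pi) ^ (1 / p)

/-- The Bergman projection `P_ω(f)(z) = ∫_𝔻 f(ζ) conj(B_z^ω(ζ)) ω(ζ) dA(ζ)`. -/
def Pw (w : ℝ → ℝ) (f : ℂ → ℂ) (z : ℂ) : ℂ :=
  (∫ ζ in Metric.ball (0:ℂ) 1, f ζ * (starRingEnd ℂ) (Bker w z ζ) * ((w ‖ζ‖ : ℝ) : ℂ)) /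
    ((Real.pi : ℝ) : ℂ)

/-- `P_ω` is bounded on `L^p_ν`: for every `f ∈ L^p_ν` the defining integral converges
absolutely for a.e. `z ∈ 𝔻` and `‖P_ω f‖_{L^p_ν} ≤ C ‖f‖_{L^p_ν}`. -/
def PwBounded (p : ℝ) (w v : ℝ → ℝ) : Prop :=
  ∃ C > (0:ℝ), ∀ f : ℂ → ℂ, Measurable f → LpC p v f < ⊤ →
    (∀ᵐ z ∂(volume.restrict (Metric.ball (0:ℂ) 1)),
      (∫⁻ ζ in Metric.ball (0:ℂ) 1, ENNReal.ofReal (‖f ζ‖ * ‖Bker w z ζ‖ * w ‖ζ‖)) < ⊤) ∧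
    LpC p v (Pw w f) ≤ ENNReal.ofReal C * LpC p v f

/-- `σ(s) = (ω(s)/ν(s)^{1/p})^{p'}`, as an extended nonnegative real (so `σ(s) = ∞`
when `ν(s) = 0 < ω(s)`). -/
def sigmaE (p : ℝ) (w v : ℝ → ℝ) (s : ℝ) : ℝ≥0∞ :=
  (ENNReal.ofReal (w s) / ENNReal.ofReal (v s) ^ (1 / p)) ^ (p / (p - 1))

/-- The Muckenhoupt-type quantity
`A_p(ω,ν) = sup_{0 ≤ r < 1} ν̂₁(r)^{1/p} σ̂₁(r)^{1/p'} / ω̂₁(r)` (note `1/p' = 1 - 1/p`). -/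
def ApE (p : ℝ) (w v : ℝ → ℝ) : ℝ≥0∞ :=
  ⨆ r ∈ Set.Ico (0:ℝ) 1,
    (∫⁻ s in Set.Ioo r 1, ENNReal.ofReal (s * v s)) ^ (1 / p) *
      (∫⁻ s in Set.Ioo r 1, ENNReal.ofReal s * sigmaE p w v s) ^ (1 - 1 / p) /
      ENNReal.ofReal (hat1 w r)

lemma polar_target_prod :
    (volume : Measure (ℝ × ℝ)).restrict polarCoord.target =
      (volume.restrict (Ioi (0:ℝ))).prod (volume.restrict (Ioo (-Real.pi) Real.pi)) := by
  rw [Measure.prod_restrict]; rfl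

lemma polar_lint (g : ℝ → ℝ≥0∞) (hg : Measurable g) :
    ∫⁻ z in Metric.ball (0:ℂ) 1, g ‖z‖ =
      ENNReal.ofReal (2 * Real.pi) * ∫⁻ s in Ioo (0:ℝ) 1, ENNReal.ofReal s * g s := by
  rw [← lintegral_indicator measurableSet_ball, ← Complex.lintegral_comp_polarCoord_symm,
    polar_target_prod]
  have h1 : ∀ᵐ q : ℝ × ℝ ∂((volume.restrict (Ioi (0:ℝ))).prod
      (volume.restrict (Ioo (-Real.pi) Real.pi))),
      ENNReal.ofReal q.1 • (Metric.ball (0:ℂ) 1).indicator (fun z => g ‖z‖)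
        (Complex.polarCoord.symm q)
      = (fun s => (Iio (1:ℝ)).indicator (fun s => ENNReal.ofReal s * g s) s) q.1
        * (fun _ => (1:ℝ≥0∞)) q.2 := by
    rw [Measure.prod_restrict]
    refine (ae_restrict_iff' (measurableSet_Ioi.prod measurableSet_Ioo)).2 (ae_of_all _ ?_)
    rintro ⟨s, t⟩ ⟨hs, -⟩
    have hs' : (0:ℝ) < s := hs
    have hn : ‖Complex.polarCoord.symm (s, t)‖ = s := by
      rw [Complex.norm_polarCoord_symm, abs_of_pos hs']
    by_cases h : s < 1
    · rw [indicator_of_mem (by rw [mem_ball_zero_iff, hn]; exact h)]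
      simp only [hn]
      rw [indicator_of_mem (by exact h)]
      simp
    · rw [indicator_of_notMem (by rw [mem_ball_zero_iff, hn]; exact h)]
      simp only
      rw [indicator_of_notMem (by exact h)]
      simp
  rw [lintegral_congr_ae h1, lintegral_prod_mul
    (f := fun s => (Iio (1:ℝ)).indicator (fun s => ENNReal.ofReal s * g s) s)
    (g := fun _ : ℝ => (1:ℝ≥0∞))]
  · rw [lintegral_indicator measurableSet_Iio, Measure.restrict_restrict measurableSet_Iio,
      Iio_inter_Ioi, lintegral_one, Measure.restrict_apply_univ, Real.volume_Ioo, mul_comm]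
    congr 2; ring
  · exact ((ENNReal.measurable_ofReal.mul hg).indicator measurableSet_Iio).aemeasurable
  · exact aemeasurable_const

lemma ae_radial {P : ℝ → Prop} (h : ∀ᵐ s ∂(volume.restrict (Ioo (0:ℝ) 1)), P s) :
    ∀ᵐ z ∂(volume.restrict (Metric.ball (0:ℂ) 1)), P ‖z‖ := by
  obtain ⟨t, hPt, htm, ht0⟩ := exists_measurable_superset_of_null (ae_iff.1 h)
  have h0 := polar_lint (t.indicator 1) (measurable_one.indicator htm)
  have h1 : ∫⁻ s in Ioo (0:ℝ) 1, ENNReal.ofReal s * t.indicator 1 s = 0 := by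
    rw [lintegral_eq_zero_iff]
    · have : ∀ᵐ s ∂(volume.restrict (Ioo (0:ℝ) 1)), s ∉ t := by
        rw [ae_iff]; simpa using ht0
      filter_upwards [this] with s hs
      simp [hs]
    · exact ENNReal.measurable_ofReal.mul (measurable_one.indicator htm)
  rw [h1, mul_zero, lintegral_eq_zero_iff
    (show Measurable fun z : ℂ => t.indicator (1 : ℝ → ℝ≥0∞) ‖z‖ from
      (measurable_one.indicator htm).comp measurable_norm)] at h0
  filter_upwards [h0] with z hz
  by_contra hc
  have : ‖z‖ ∈ t := hPt hc
  simp [this] at hz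

lemma polar_int (n k : ℕ) (G : ℝ → ℝ) :
    ∫ z in Metric.ball (0:ℂ) 1, z ^ n * (starRingEnd ℂ z) ^ k * ((G ‖z‖ : ℝ) : ℂ) =
      ((∫ s in Ioo (0:ℝ) 1, s ^ (n + k + 1) * G s : ℝ) : ℂ) *
        (if n = k then ((2 * Real.pi : ℝ) : ℂ) else 0) := by
  rw [← integral_indicator measurableSet_ball, ← Complex.integral_comp_polarCoord_symm,
    polar_target_prod]
  have h1 : ∀ᵐ q : ℝ × ℝ ∂((volume.restrict (Ioi (0:ℝ))).prod
      (volume.restrict (Ioo (-Real.pi) Real.pi))),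
      q.1 • (Metric.ball (0:ℂ) 1).indicator
        (fun z => z ^ n * (starRingEnd ℂ z) ^ k * ((G ‖z‖ : ℝ) : ℂ))
        (Complex.polarCoord.symm q)
      = (fun s => (((Iio (1:ℝ)).indicator (fun s => s ^ (n + k + 1) * G s) s : ℝ) : ℂ)) q.1
        * (fun t : ℝ => Complex.exp ((((n:ℂ) - k) * Complex.I) * t)) q.2 := by
    rw [Measure.prod_restrict]
    refine (ae_restrict_iff' (measurableSet_Ioi.prod measurableSet_Ioo)).2 (ae_of_all _ ?_)
    rintro ⟨s, t⟩ ⟨hs, -⟩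
    have hs' : (0:ℝ) < s := hs
    have hn : ‖Complex.polarCoord.symm (s, t)‖ = s := by
      rw [Complex.norm_polarCoord_symm, abs_of_pos hs']
    by_cases h : s < 1
    · rw [indicator_of_mem (by rw [mem_ball_zero_iff, hn]; exact h)]
      simp only [hn]
      rw [indicator_of_mem (by exact h), Complex.polarCoord_symm_apply]
      have e1 : ((Real.cos t : ℝ) : ℂ) + ((Real.sin t : ℝ) : ℂ) * Complex.I
          = Complex.exp (t * Complex.I) := by
        rw [Complex.exp_mul_I]; simp
      simp only
      rw [e1, map_mul, Complex.conj_ofReal, ← Complex.exp_conj, map_mul, Complex.conj_ofReal,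
        Complex.conj_I, mul_pow, mul_pow, ← Complex.exp_nat_mul, ← Complex.exp_nat_mul]
      have e2 : Complex.exp ((((n:ℂ) - k) * Complex.I) * t) =
          Complex.exp (n * (t * Complex.I)) * Complex.exp (k * (t * -Complex.I)) := by
        rw [← Complex.exp_add]; congr 1; ring
      rw [e2, Complex.real_smul]
      push_cast
      ring
    · rw [indicator_of_notMem (by rw [mem_ball_zero_iff, hn]; exact h)]
      simp only
      rw [indicator_of_notMem (by exact h)]
      simp
  rw [integral_congr_ae h1, integral_prod_mul
    (fun s => (((Iio (1:ℝ)).indicator (fun s => s ^ (n + k + 1) * G s) s : ℝ) : ℂ))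
    (fun t : ℝ => Complex.exp ((((n:ℂ) - k) * Complex.I) * t)), integral_complex_ofReal,
    integral_indicator measurableSet_Iio, Measure.restrict_restrict measurableSet_Iio,
    Iio_inter_Ioi]
  congr 1
  rw [← integral_Ioc_eq_integral_Ioo, ← intervalIntegral.integral_of_le
    (by linarith [Real.pi_pos])]
  split_ifs with h
  · subst h; simp; ring
  · have hc : ((n:ℂ) - k) * Complex.I ≠ 0 := by
      refine mul_ne_zero (sub_ne_zero.2 ?_) Complex.I_ne_zero
      exact_mod_cast h
    rw [integral_exp_mul_complex hc]
    rw [div_eq_zero_iff]; left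
    rw [sub_eq_zero, Complex.exp_eq_exp_iff_exists_int]
    refine ⟨(n:ℤ) - k, ?_⟩
    push_cast; ring

lemma rw_integrable {w : ℝ → ℝ} (hw : IsRadialWeight w) : IntegrableOn w (Ioo (0:ℝ) 1) :=
  hw.2.1.mono_set Ioo_subset_Ico_self

lemma pow_mul_integrable {w : ℝ → ℝ} (hw : IntegrableOn w (Ioo (0:ℝ) 1)) (n : ℕ) :
    IntegrableOn (fun s => s ^ n * w s) (Ioo (0:ℝ) 1) := by
  refine Integrable.bdd_mul (c := 1) hw (by fun_prop) ?_
  filter_upwards [ae_restrict_mem measurableSet_Ioo] with s hs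
  rw [norm_pow, Real.norm_of_nonneg hs.1.le]
  exact pow_le_one₀ hs.1.le hs.2.le

lemma hatw_anti {w : ℝ → ℝ} (hw : IsRadialWeight w) {r t : ℝ} (hr : 0 ≤ r) (h : r ≤ t) :
    hatw w t ≤ hatw w r := by
  unfold hatw
  refine setIntegral_mono_set ((rw_integrable hw).mono_set (Ioo_subset_Ioo_left hr)) ?_
    (Ioo_subset_Ioo_left h).eventuallyLE
  filter_upwards [ae_restrict_mem measurableSet_Ioo] with s hs
  exact hw.1 s ⟨hr.trans hs.1.le, hs.2⟩

lemma rad_mem (m : ℕ) : (1 - (1/2:ℝ)^m) ∈ Ico (0:ℝ) 1 := by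
  have h1 : (1/2:ℝ)^m ≤ 1 := pow_le_one₀ (by norm_num) (by norm_num)
  have h2 : 0 < (1/2:ℝ)^m := by positivity
  exact ⟨by linarith, by linarith⟩

lemma hatw_iter {w : ℝ → ℝ} {C : ℝ} (hC0 : 0 ≤ C)
    (hC : ∀ r ∈ Ico (0:ℝ) 1, hatw w r ≤ C * hatw w ((1 + r) / 2)) (j i : ℕ) :
    hatw w (1 - (1/2:ℝ)^j) ≤ C ^ i * hatw w (1 - (1/2:ℝ)^(j+i)) := by
  induction i with
  | zero => simp
  | succ i ih =>
    have h := hC _ (rad_mem (j+i))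
    have e : (1 + (1 - (1/2:ℝ)^(j+i))) / 2 = 1 - (1/2:ℝ)^(j+(i+1)) := by
      rw [← add_assoc, pow_succ]; ring
    rw [e] at h
    calc _ ≤ _ := ih
      _ ≤ C ^ i * (C * hatw w (1 - (1/2:ℝ)^(j+(i+1)))) := by gcongr
      _ = _ := by ring

lemma mom_bound {w : ℝ → ℝ} (hw : IsRadialWeight w) {C : ℝ} (hC1 : 1 ≤ C)
    (hC : ∀ r ∈ Ico (0:ℝ) 1, hatw w r ≤ C * hatw w ((1 + r) / 2)) :
    ∃ K : ℝ, 0 < K ∧ ∀ m : ℕ,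
      ∫ s in Ioo (0:ℝ) 1, s ^ (2 ^ m) * w s ≤ K * hatw w (1 - (1/2:ℝ)^m) := by
  obtain ⟨L, hL⟩ : ∃ L : ℕ, Real.exp (-(2:ℝ)^L) * C ≤ 1/2 := by
    have h1 : Filter.Tendsto (fun L : ℕ => Real.exp (-(2:ℝ)^L) * C) Filter.atTop
        (nhds (0 * C)) := by
      refine Filter.Tendsto.mul_const _ (Real.tendsto_exp_neg_atTop_nhds_zero.comp ?_)
      exact tendsto_pow_atTop_atTop_of_one_lt (by norm_num)
    rw [zero_mul] at h1
    exact (h1.eventually (ge_mem_nhds (by norm_num : (0:ℝ) < 1/2))).exists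
  have hpos : ∀ m : ℕ, 0 < hatw w (1 - (1/2:ℝ)^m) := fun m => hw.2.2 _ (rad_mem m)
  have hCp : 0 < C := by linarith
  refine ⟨2 * C ^ (L+1), by positivity, fun m => ?_⟩
  have hsmall : ∀ m ≤ L + 1,
      ∫ s in Ioo (0:ℝ) 1, s ^ (2 ^ m) * w s ≤ 2 * C^(L+1) * hatw w (1 - (1/2:ℝ)^m) := by
    intro m hm
    have h1 : ∫ s in Ioo (0:ℝ) 1, s ^ (2 ^ m) * w s ≤ hatw w (1 - (1/2:ℝ)^0) := by
      simp only [pow_zero, sub_self]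
      unfold hatw
      refine setIntegral_mono_on (pow_mul_integrable (rw_integrable hw) _) (rw_integrable hw)
        measurableSet_Ioo fun s hs => ?_
      exact mul_le_of_le_one_left (hw.1 s ⟨hs.1.le, hs.2⟩) (pow_le_one₀ hs.1.le hs.2.le)
    have h2 := hatw_iter hCp.le hC 0 m
    rw [zero_add] at h2
    have h3 : C ^ m ≤ C ^ (L+1) := pow_le_pow_right₀ hC1 hm
    have h4 : 0 < C ^ (L+1) := by positivity
    calc _ ≤ C ^ m * hatw w (1 - (1/2:ℝ)^m) := h1.trans h2
      _ ≤ _ := mul_le_mul_of_nonneg_right (by linarith) (hpos m).le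
  induction m with
  | zero => exact hsmall 0 (by omega)
  | succ m ih =>
    rcases Nat.lt_or_ge m L with h | h
    · exact hsmall _ (by omega)
    obtain ⟨j, rfl⟩ := Nat.exists_eq_add_of_le' h
    set ρ := Real.exp (-(2:ℝ)^L) with hρ
    have hρ0 : 0 < ρ := Real.exp_pos _
    have key : ∫ s in Ioo (0:ℝ) 1, s ^ (2 ^ (j + L + 1)) * w s ≤
        ρ * (∫ s in Ioo (0:ℝ) 1, s ^ (2 ^ (j + L)) * w s) + hatw w (1 - (1/2:ℝ)^j) := by
      have e : hatw w (1 - (1/2:ℝ)^j) =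
          ∫ s in Ioo (0:ℝ) 1, (Ioo (1 - (1/2:ℝ)^j) 1).indicator w s := by
        unfold hatw
        rw [setIntegral_indicator measurableSet_Ioo,
          inter_eq_self_of_subset_right (Ioo_subset_Ioo_left (rad_mem j).1)]
      have hi : IntegrableOn ((Ioo (1 - (1/2:ℝ)^j) 1).indicator w) (Ioo (0:ℝ) 1) :=
        (rw_integrable hw).indicator measurableSet_Ioo
      rw [e, ← integral_const_mul, ← integral_add
        ((pow_mul_integrable (rw_integrable hw) _).const_mul ρ) hi]
      refine setIntegral_mono_on_ae (pow_mul_integrable (rw_integrable hw) _)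
        (((pow_mul_integrable (rw_integrable hw) _).const_mul ρ).add hi)
        measurableSet_Ioo (ae_of_all _ fun s hs => ?_)
      have hws := hw.1 s ⟨hs.1.le, hs.2⟩
      have hs1 : s ^ (2 ^ (j+L)) ≤ 1 := pow_le_one₀ hs.1.le hs.2.le
      have hs0 : 0 ≤ s ^ (2 ^ (j+L)) := pow_nonneg hs.1.le _
      have hsq : s ^ (2 ^ (j + L + 1)) = s ^ (2 ^ (j+L)) * s ^ (2 ^ (j+L)) := by
        rw [← pow_add]; congr 1; ring
      rw [hsq]
      by_cases hsj : 1 - (1/2:ℝ)^j < s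
      · rw [indicator_of_mem (by exact ⟨hsj, hs.2⟩)]
        have : s ^ (2 ^ (j+L)) * s ^ (2 ^ (j+L)) * w s ≤ w s :=
          mul_le_of_le_one_left hws (mul_le_one₀ hs1 hs0 hs1)
        have : 0 ≤ ρ * (s ^ (2 ^ (j+L)) * w s) := by positivity
        linarith
      · rw [indicator_of_notMem (fun hh => hsj hh.1), add_zero, mul_assoc]
        refine mul_le_mul_of_nonneg_right ?_ (by positivity)
        push Not at hsj
        have : s ≤ Real.exp (-(1/2:ℝ)^j) := hsj.trans (Real.one_sub_le_exp_neg _)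
        calc s ^ (2 ^ (j+L)) ≤ (Real.exp (-(1/2:ℝ)^j)) ^ (2 ^ (j+L)) := by
              gcongr
              exact hs.1.le
          _ = ρ := by
              rw [← Real.exp_nat_mul, hρ]
              congr 1
              push_cast
              rw [pow_add, one_div, inv_pow]
              field_simp
    have h1 := hatw_iter hCp.le hC j (L+1)
    have h2 := hatw_iter hCp.le hC (j+L) 1
    rw [pow_one] at h2
    rw [← add_assoc] at h1
    have hp1 := hpos (j+L+1)
    have h4 : 0 < C ^ (L+1) := by positivity
    calc _ ≤ _ := key
      _ ≤ ρ * (2 * C^(L+1) * (C * hatw w (1 - (1/2:ℝ)^(j+L+1)))) +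
          C^(L+1) * hatw w (1 - (1/2:ℝ)^(j+L+1)) := by
        refine add_le_add (mul_le_mul_of_nonneg_left (ih.trans ?_) hρ0.le) h1
        exact mul_le_mul_of_nonneg_left h2 (by positivity)
      _ = (ρ * C) * (2 * (C^(L+1) * hatw w (1 - (1/2:ℝ)^(j+L+1)))) +
          C^(L+1) * hatw w (1 - (1/2:ℝ)^(j+L+1)) := by ring
      _ ≤ (1/2) * (2 * (C^(L+1) * hatw w (1 - (1/2:ℝ)^(j+L+1)))) +
          C^(L+1) * hatw w (1 - (1/2:ℝ)^(j+L+1)) := by gcongr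
      _ = _ := by ring

lemma quarter_le (m : ℕ) : (1/4:ℝ) ≤ (1 - (1/2:ℝ)^(m+1)) ^ (2 ^ (m+1)) := by
  induction m with
  | zero => norm_num
  | succ m ih =>
    refine ih.trans ?_
    rw [pow_succ 2 (m+1), mul_comm (2^(m+1)) 2, pow_mul]
    refine pow_le_pow_left₀ (rad_mem _).1 ?_ _
    rw [pow_succ (1/2:ℝ) (m+1)]
    nlinarith [sq_nonneg ((1/2:ℝ)^(m+1))]

lemma half_hatw_le {w : ℝ → ℝ} (hw : IsRadialWeight w) {r : ℝ} (hr : 1/2 ≤ r) :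
    hatw w r ≤ 2 * hat1 w r := by
  unfold hatw hat1
  have hi : IntegrableOn w (Ioo r 1) :=
    (rw_integrable hw).mono_set (Ioo_subset_Ioo_left (by linarith))
  have hi2 : IntegrableOn (fun s => s * w s) (Ioo r 1) := by
    have := pow_mul_integrable (rw_integrable hw) 1
    simp only [pow_one] at this
    exact this.mono_set (Ioo_subset_Ioo_left (by linarith))
  rw [← integral_const_mul]
  refine setIntegral_mono_on hi (hi2.const_mul 2) measurableSet_Ioo fun s hs => ?_
  have := hw.1 s ⟨by linarith [hs.1], hs.2⟩
  nlinarith [hs.1]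

lemma hat1_anti {w : ℝ → ℝ} (hw : IsRadialWeight w) {r t : ℝ} (hr : 0 ≤ r) (h : r ≤ t) :
    hat1 w t ≤ hat1 w r := by
  unfold hat1
  have := pow_mul_integrable (rw_integrable hw) 1
  simp only [pow_one] at this
  refine setIntegral_mono_set (this.mono_set (Ioo_subset_Ioo_left hr)) ?_
    (Ioo_subset_Ioo_left h).eventuallyLE
  filter_upwards [ae_restrict_mem measurableSet_Ioo] with s hs
  exact mul_nonneg (hr.trans hs.1.le) (hw.1 s ⟨hr.trans hs.1.le, hs.2⟩)

lemma moment_le {w : ℝ → ℝ} (hw : IsRadialWeight w) (n k : ℕ) (h : k ≤ 2 * n + 1) :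
    moment w n ≤ ∫ s in Ioo (0:ℝ) 1, s ^ k * w s := by
  unfold moment
  refine setIntegral_mono_on (pow_mul_integrable (rw_integrable hw) _)
    (pow_mul_integrable (rw_integrable hw) _) measurableSet_Ioo fun s hs => ?_
  exact mul_le_mul_of_nonneg_right (pow_le_pow_of_le_one hs.1.le hs.2.le h)
    (hw.1 s ⟨hs.1.le, hs.2⟩)

lemma moment_hat {w : ℝ → ℝ} (hw : IsRadialWeight w) (hD : Dhat w) :
    ∃ K : ℝ, 0 < K ∧ ∀ r ∈ Ico (0:ℝ) 1, ∃ n : ℕ, (∀ s ∈ Ioo r 1, (1/4:ℝ) ≤ s ^ n) ∧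
      moment w n ≤ K * hat1 w r := by
  obtain ⟨C, hC⟩ := hD
  have hC1 : 1 ≤ C := by
    have h1 := hC 0 (by simp)
    have h2 := hatw_anti hw (r := 0) (t := (1+0)/2) le_rfl (by norm_num)
    have h3 := hw.2.2 ((1+0)/2) (by norm_num)
    by_contra hlt
    push Not at hlt
    nlinarith
  obtain ⟨K, hK, hKm⟩ := mom_bound hw hC1 hC
  refine ⟨2 * C * (K + 1), by positivity, fun r hr => ?_⟩
  rcases lt_or_ge r (1/2) with h | h
  · refine ⟨0, fun s _ => by norm_num, ?_⟩
    have h1 := moment_le hw 0 0 (by omega)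
    have h2 : ∫ s in Ioo (0:ℝ) 1, s ^ 0 * w s = hatw w 0 := by simp [hatw]
    have h3 := hC 0 (by simp)
    have h4 := half_hatw_le hw (r := (1+0)/2) (by norm_num)
    have h5 := hat1_anti hw hr.1 (t := (1+0)/2) (by linarith)
    have h6 := hw.2.2 ((1+0)/2) (by norm_num)
    have h7 : 0 < hat1 w r := by linarith
    calc moment w 0 ≤ C * hatw w ((1+0)/2) := by linarith
      _ ≤ C * (2 * hat1 w r) := by gcongr; linarith
      _ = 2 * C * (0 + 1) * hat1 w r := by ring
      _ ≤ _ := by gcongr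
  · have hex : ∃ m : ℕ, r < 1 - (1/2:ℝ)^m := by
      obtain ⟨m, hm⟩ := exists_pow_lt_of_lt_one (show 0 < 1 - r by linarith [hr.2])
        (show (1/2:ℝ) < 1 by norm_num)
      exact ⟨m, by linarith⟩
    classical
    obtain ⟨m, hm1, hm2⟩ : ∃ m : ℕ, 1 - (1/2:ℝ)^(m+1) ≤ r ∧ r < 1 - (1/2:ℝ)^(m+2) := by
      have hs := Nat.find_spec hex
      have hmin := fun k => Nat.find_min hex (m := k)
      rcases hN : Nat.find hex with _ | _ | N
      · rw [hN] at hs; norm_num at hs; linarith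
      · rw [hN] at hs; norm_num at hs; linarith
      · rw [hN] at hs hmin
        exact ⟨N, not_lt.1 (hmin (N+1) (by omega)), hs⟩
    refine ⟨2 ^ (m+1), fun s hs => ?_, ?_⟩
    · refine (quarter_le m).trans (pow_le_pow_left₀ (rad_mem _).1 (by linarith [hs.1]) _)
    · have h1 := moment_le hw (2^(m+1)) (2^(m+1)) (by omega)
      have h2 := hKm (m+1)
      have h3 := hatw_iter (by linarith) hC (m+1) 1
      rw [pow_one] at h3
      have h4 := hatw_anti hw hr.1 hm2.le
      have h5 := half_hatw_le hw h
      have h7 : 0 < hat1 w r := by linarith [hw.2.2 r hr]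
      calc _ ≤ K * hatw w (1 - (1/2:ℝ)^(m+1)) := h1.trans h2
        _ ≤ K * (C * (2 * hat1 w r)) := by
            refine mul_le_mul_of_nonneg_left (h3.trans ?_) hK.le
            exact mul_le_mul_of_nonneg_left (h4.trans h5) (by linarith)
        _ = 2 * C * (K + 0) * hat1 w r := by ring
        _ ≤ _ := by gcongr; norm_num

lemma moment_ge {w : ℝ → ℝ} (hw : IsRadialWeight w) (k : ℕ) {u : ℝ} (hu0 : 0 < u) (_hu : u < 1) :
    u ^ (2 * k + 1) * hatw w u ≤ moment w k := by
  unfold hatw moment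
  have hi := pow_mul_integrable (rw_integrable hw) (2*k+1)
  have hs : Ioo u 1 ⊆ Ioo (0:ℝ) 1 := Ioo_subset_Ioo_left hu0.le
  rw [← integral_const_mul]
  calc _ ≤ ∫ s in Ioo u 1, s ^ (2*k+1) * w s := by
        refine setIntegral_mono_on (((rw_integrable hw).mono_set hs).const_mul _)
          (hi.mono_set hs) measurableSet_Ioo fun s hs => ?_
        have h0 : 0 < s := hu0.trans hs.1
        exact mul_le_mul_of_nonneg_right (pow_le_pow_left₀ hu0.le hs.1.le _)
          (hw.1 s ⟨h0.le, hs.2⟩)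
    _ ≤ _ := by
        refine setIntegral_mono_set hi ?_ hs.eventuallyLE
        filter_upwards [ae_restrict_mem measurableSet_Ioo] with s hs
        exact mul_nonneg (pow_nonneg hs.1.le _) (hw.1 s ⟨hs.1.le, hs.2⟩)

lemma moment_pos {w : ℝ → ℝ} (hw : IsRadialWeight w) (k : ℕ) : 0 < moment w k := by
  refine lt_of_lt_of_le ?_ (moment_ge hw k (u := 1/2) (by norm_num) (by norm_num))
  have := hw.2.2 (1/2) (by norm_num)
  positivity

lemma summable_moment {w : ℝ → ℝ} (hw : IsRadialWeight w) {t : ℝ} (ht0 : 0 ≤ t) (ht : t < 1) :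
    Summable fun k : ℕ => t ^ k / (2 * moment w k) := by
  set u := (1 + t) / 2 with hu
  have hu0 : 0 < u := by linarith
  have hu1 : u < 1 := by linarith
  have hh := hw.2.2 u ⟨hu0.le, hu1⟩
  have hlt : t / u ^ 2 < 1 := by
    rw [div_lt_one (by positivity), hu]
    nlinarith [mul_pos (sub_pos.2 ht) (sub_pos.2 ht)]
  refine Summable.of_nonneg_of_le (fun k => ?_) (fun k => ?_)
    ((summable_geometric_of_lt_one (by positivity) hlt).mul_left (1 / (u * hatw w u)))
  · have := moment_pos hw k
    positivity
  · have h1 := moment_ge hw k hu0 hu1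
    have h2 := moment_pos hw k
    have e : 1 / (u * hatw w u) * (t / u^2)^k = t ^ k / (u ^ (2*k+1) * hatw w u) := by
      rw [div_pow, ← pow_mul, pow_succ]; field_simp
    rw [e]
    refine div_le_div_of_nonneg_left (by positivity) (by positivity) (by linarith)

lemma radial_integrable {w : ℝ → ℝ} (hm : Measurable w) (h0 : ∀ s, 0 ≤ w s)
    (hi : IntegrableOn w (Ioo (0:ℝ) 1)) :
    IntegrableOn (fun z : ℂ => w ‖z‖) (Metric.ball (0:ℂ) 1) := by
  refine ⟨(hm.comp measurable_norm).aestronglyMeasurable, ?_⟩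
  rw [hasFiniteIntegral_iff_ofReal (ae_of_all _ fun z => h0 _),
    polar_lint (fun s => ENNReal.ofReal (w s)) hm.ennreal_ofReal]
  refine ENNReal.mul_lt_top ENNReal.ofReal_lt_top ?_
  have h1 : ∫⁻ s in Ioo (0:ℝ) 1, ENNReal.ofReal (w s) < ⊤ := by
    have := hi.2
    rwa [hasFiniteIntegral_iff_ofReal (ae_of_all _ h0)] at this
  refine lt_of_le_of_lt (setLIntegral_mono hm.ennreal_ofReal fun s hs => ?_) h1
  refine mul_le_of_le_one_left (by positivity) ?_
  exact ENNReal.ofReal_le_one.2 hs.2.le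

lemma Pw_formula {w : ℝ → ℝ} (hw : IsRadialWeight w) (hm : Measurable w) (h0 : ∀ s, 0 ≤ w s)
    (n : ℕ) {h : ℝ → ℝ} (hh : Measurable h) {K : ℝ} (hK : ∀ s, |h s| ≤ K) {z : ℂ}
    (hz : ‖z‖ < 1) :
    Pw w (fun ζ => ζ ^ n * ((h ‖ζ‖ : ℝ) : ℂ)) z =
      z ^ n * (((∫ s in Ioo (0:ℝ) 1, s ^ (2 * n + 1) * (h s * w s)) / moment w n : ℝ) : ℂ) := by
  have hK0 : 0 ≤ K := (abs_nonneg _).trans (hK 0)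
  have hmp := moment_pos hw
  set F : ℕ → ℂ → ℂ := fun k ζ =>
    ζ ^ n * ((h ‖ζ‖ : ℝ) : ℂ) * (z ^ k * (starRingEnd ℂ ζ) ^ k / ((2 * moment w k : ℝ) : ℂ)) *
      ((w ‖ζ‖ : ℝ) : ℂ) with hF
  have hwi := radial_integrable hm h0 (rw_integrable hw)
  have hFm : ∀ k, Measurable (F k) := by
    intro k
    have h1 : Measurable fun ζ : ℂ => ((h ‖ζ‖ : ℝ) : ℂ) :=
      Complex.measurable_ofReal.comp (hh.comp measurable_norm)
    have h2 : Measurable fun ζ : ℂ => ((w ‖ζ‖ : ℝ) : ℂ) :=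
      Complex.measurable_ofReal.comp (hm.comp measurable_norm)
    have h3 : Measurable fun ζ : ℂ => starRingEnd ℂ ζ := Complex.continuous_conj.measurable
    simp only [hF]
    fun_prop
  have hFb : ∀ k, ∀ ζ ∈ Metric.ball (0:ℂ) 1,
      ‖F k ζ‖ ≤ ‖z‖ ^ k / (2 * moment w k) * (K * w ‖ζ‖) := by
    intro k ζ hζ
    rw [mem_ball_zero_iff] at hζ
    have hmk := hmp k
    have hb1 : ‖ζ‖ ^ n ≤ 1 := pow_le_one₀ (norm_nonneg _) hζ.le
    have hb2 : ‖ζ‖ ^ k ≤ 1 := pow_le_one₀ (norm_nonneg _) hζ.le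
    simp only [hF, norm_mul, norm_div, norm_pow, RCLike.norm_conj, Complex.norm_real,
      Real.norm_eq_abs]
    rw [abs_of_nonneg (h0 _), abs_of_pos (by norm_num : (0:ℝ) < 2), abs_of_pos hmk]
    have hw0 := h0 ‖ζ‖
    calc _ ≤ 1 * K * (‖z‖ ^ k * 1 / (2 * moment w k)) * w ‖ζ‖ := by
          gcongr
          exact hK _
      _ = _ := by ring
  have hFi : ∀ k, IntegrableOn (F k) (Metric.ball (0:ℂ) 1) := by
    intro k
    refine Integrable.mono' ((hwi.const_mul K).const_mul (‖z‖ ^ k / (2 * moment w k)))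
      (hFm k).aestronglyMeasurable ?_
    filter_upwards [ae_restrict_mem measurableSet_ball] with ζ hζ using hFb k ζ hζ
  have hsum : Summable fun k => ∫ ζ in Metric.ball (0:ℂ) 1, ‖F k ζ‖ := by
    refine Summable.of_nonneg_of_le (fun k => integral_nonneg fun _ => norm_nonneg _)
      (fun k => ?_) ((summable_moment hw (norm_nonneg z) hz).mul_right
        (∫ ζ in Metric.ball (0:ℂ) 1, K * w ‖ζ‖))
    rw [← integral_const_mul]
    exact setIntegral_mono_on (hFi k).norm
      ((hwi.const_mul K).const_mul (‖z‖ ^ k / (2 * moment w k))) measurableSet_ball (hFb k)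
  have hpt : ∀ ζ : ℂ, ζ ^ n * ((h ‖ζ‖ : ℝ) : ℂ) * (starRingEnd ℂ) (Bker w z ζ) *
      ((w ‖ζ‖ : ℝ) : ℂ) = ∑' k, F k ζ := by
    intro ζ
    simp only [hF, Bker]
    rw [tsum_mul_right, tsum_mul_left, Complex.conj_tsum]
    congr 2
    refine tsum_congr fun k => ?_
    rw [map_div₀, Complex.conj_ofReal]
    simp [mul_pow]
  have hFint : ∀ k, ∫ ζ in Metric.ball (0:ℂ) 1, F k ζ =
      z ^ k / ((2 * moment w k : ℝ) : ℂ) *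
      (((∫ s in Ioo (0:ℝ) 1, s ^ (n + k + 1) * (h s * w s) : ℝ) : ℂ) *
        (if n = k then ((2 * Real.pi : ℝ) : ℂ) else 0)) := by
    intro k
    rw [← polar_int n k (fun s => h s * w s), ← integral_const_mul]
    refine integral_congr_ae (ae_of_all _ fun ζ => ?_)
    simp only [hF]
    push_cast
    ring
  unfold Pw
  simp_rw [hpt]
  rw [← integral_tsum_of_summable_integral_norm hFi hsum]
  simp_rw [hFint]
  rw [tsum_eq_single n (fun k hk => by simp [hk.symm])]
  have e : n + n + 1 = 2 * n + 1 := by ring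
  have h1 : ((moment w n : ℝ) : ℂ) ≠ 0 := by exact_mod_cast (hmp n).ne'
  have h2 : ((Real.pi : ℝ) : ℂ) ≠ 0 := by exact_mod_cast Real.pi_ne_zero
  rw [e, if_pos rfl]
  push_cast
  field_simp

/-- The truncated test density. -/
def trunc (p : ℝ) (w v : ℝ → ℝ) (k : ℕ) (s : ℝ) : ℝ :=
  (min (w s) k / (v s + 1 / ((k:ℝ) + 1))) ^ (1 / (p - 1))

lemma trunc_meas (p : ℝ) {w v : ℝ → ℝ} (hwm : Measurable w) (hvm : Measurable v) (k : ℕ) :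
    Measurable (trunc p w v k) := by
  unfold trunc
  exact ((hwm.min measurable_const).div (hvm.add measurable_const)).pow_const _

lemma trunc_nonneg (p : ℝ) {w v : ℝ → ℝ} (hw0 : ∀ s, 0 ≤ w s) (hv0 : ∀ s, 0 ≤ v s) (k : ℕ)
    (s : ℝ) : 0 ≤ trunc p w v k s := by
  unfold trunc
  have := hw0 s
  have := hv0 s
  have : 0 ≤ min (w s) k := le_min (hw0 s) (by positivity)
  positivity

lemma trunc_bdd {p : ℝ} (hp : 1 < p) {w v : ℝ → ℝ} (hw0 : ∀ s, 0 ≤ w s) (hv0 : ∀ s, 0 ≤ v s)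
    (k : ℕ) (s : ℝ) : trunc p w v k s ≤ ((k:ℝ) / (1 / ((k:ℝ) + 1))) ^ (1 / (p - 1)) := by
  unfold trunc
  have h1 := hv0 s
  have h2 : 0 ≤ min (w s) k := le_min (hw0 s) (by positivity)
  have h3 : 0 ≤ 1 / (p - 1) := by
    have : 0 < p - 1 := by linarith
    positivity
  refine Real.rpow_le_rpow (by positivity) ?_ h3
  exact div_le_div₀ (by positivity) (min_le_right _ _) (by positivity) (by linarith)

lemma trunc_pow {p : ℝ} (hp : 1 < p) {w v : ℝ → ℝ} (hw0 : ∀ s, 0 ≤ w s) (hv0 : ∀ s, 0 ≤ v s)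
    (k : ℕ) (s : ℝ) : trunc p w v k s ^ p * v s ≤ trunc p w v k s * min (w s) k := by
  have h1 := hv0 s
  have h2 : 0 ≤ min (w s) k := le_min (hw0 s) (by positivity)
  have hp1 : 0 < p - 1 := by linarith
  have h4 := trunc_nonneg p hw0 hv0 k s
  unfold trunc at *
  set g := min (w s) k / (v s + 1 / ((k:ℝ) + 1)) with hg
  have hg0 : 0 ≤ g := by positivity
  have e : 1 / (p-1) * p = 1 / (p-1) + 1 := by field_simp; ring
  rw [← Real.rpow_mul hg0, e, Real.rpow_add_of_nonneg hg0 (by positivity) (by norm_num),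
    Real.rpow_one, mul_assoc]
  refine mul_le_mul_of_nonneg_left ?_ h4
  rw [hg, div_mul_eq_mul_div, div_le_iff₀ (by positivity)]
  refine mul_le_mul_of_nonneg_left ?_ h2
  have : (0:ℝ) ≤ 1 / ((k:ℝ) + 1) := by positivity
  linarith

lemma core {p : ℝ} (hp : 1 < p) {w v : ℝ → ℝ} (hw : IsRadialWeight w)
    (hwm : Measurable w) (hvm : Measurable v) (hw0 : ∀ s, 0 ≤ w s) (hv0 : ∀ s, 0 ≤ v s)
    {C : ℝ} (hC : 0 < C)
    (hP : ∀ f : ℂ → ℂ, Measurable f → LpC p v f < ⊤ →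
      LpC p v (Pw w f) ≤ ENNReal.ofReal C * LpC p v f)
    {r : ℝ} (hr : r ∈ Ico (0:ℝ) 1) {n : ℕ} (hn : ∀ s ∈ Ioo r 1, (1/4:ℝ) ≤ s ^ n) (k : ℕ) :
    (∫⁻ s in Ioo r 1, ENNReal.ofReal (s * v s)) ^ (1 / p) *
      (∫⁻ s in Ioo r 1, ENNReal.ofReal (s * (trunc p w v k s * min (w s) k))) ^ (1 - 1 / p) ≤
      ENNReal.ofReal (64 * C * moment w n) := by
  have hp0 : 0 < p := by linarith
  have hpi : 0 < 1 / p := by positivity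
  have hpi1 : 1 / p < 1 := by rw [div_lt_one hp0]; exact hp
  have hM := moment_pos hw n
  set T := trunc p w v k with hT
  have hTm : Measurable T := trunc_meas p hwm hvm k
  have hT0 : ∀ s, 0 ≤ T s := trunc_nonneg p hw0 hv0 k
  set B := ((k:ℝ) / (1 / ((k:ℝ) + 1))) ^ (1 / (p - 1)) with hB
  have hTB : ∀ s, T s ≤ B := trunc_bdd hp hw0 hv0 k
  have hB0 : 0 ≤ B := (hT0 0).trans (hTB 0)
  have hsub : Ioo r 1 ⊆ Ioo (0:ℝ) 1 := Ioo_subset_Ioo_left hr.1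
  have hm0 : ∀ s, 0 ≤ min (w s) k := fun s => le_min (hw0 s) (by positivity)
  have hmm : Measurable fun s => min (w s) (k:ℝ) := hwm.min measurable_const
  set N := ∫⁻ s in Ioo r 1, ENNReal.ofReal (s * v s) with hN
  set X := ∫⁻ s in Ioo r 1, ENNReal.ofReal (s * (T s * min (w s) k)) with hX
  -- integrability of the truncated density
  have hTwi : IntegrableOn (fun s => T s * w s) (Ioo (0:ℝ) 1) := by
    refine Integrable.bdd_mul (c := B) (rw_integrable hw) hTm.aestronglyMeasurable
      (ae_of_all _ fun s => ?_)
    rw [Real.norm_of_nonneg (hT0 s)]; exact hTB s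
  have hXi : IntegrableOn (fun s => s * (T s * min (w s) k)) (Ioo r 1) := by
    refine Integrable.mono' (hTwi.mono_set hsub)
      (measurable_id.mul (hTm.mul hmm)).aestronglyMeasurable ?_
    filter_upwards [ae_restrict_mem measurableSet_Ioo] with s hs
    have hs0 : 0 ≤ s := (hsub hs).1.le
    rw [Real.norm_of_nonneg (mul_nonneg hs0 (mul_nonneg (hT0 s) (hm0 s)))]
    have h1 : T s * min (w s) k ≤ T s * w s :=
      mul_le_mul_of_nonneg_left (min_le_left _ _) (hT0 s)
    have h2 : 0 ≤ T s * min (w s) k := mul_nonneg (hT0 s) (hm0 s)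
    nlinarith [hs.2]
  set Xr := ∫ s in Ioo r 1, s * (T s * min (w s) k) with hXr
  have hXX : ENNReal.ofReal Xr = X := by
    rw [hXr, hX]
    refine ofReal_integral_eq_lintegral_ofReal hXi ?_
    filter_upwards [ae_restrict_mem measurableSet_Ioo] with s hs
    exact mul_nonneg (hsub hs).1.le (mul_nonneg (hT0 s) (hm0 s))
  have hXtop : X ≠ ⊤ := by rw [← hXX]; exact ENNReal.ofReal_ne_top
  have hXr0 : 0 ≤ Xr := by
    refine setIntegral_nonneg measurableSet_Ioo fun s hs => ?_
    exact mul_nonneg (hsub hs).1.le (mul_nonneg (hT0 s) (hm0 s))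
  -- test function
  set h : ℝ → ℝ := (Ioo r 1).indicator T with hh
  have hhm : Measurable h := hTm.indicator measurableSet_Ioo
  have hh0 : ∀ s, 0 ≤ h s := fun s => indicator_nonneg (fun s _ => hT0 s) s
  have hhB : ∀ s, |h s| ≤ B := by
    intro s
    rw [abs_of_nonneg (hh0 s)]
    exact indicator_apply_le' (fun _ => hTB s) (fun _ => hB0)
  set f : ℂ → ℂ := fun ζ => ζ ^ n * ((h ‖ζ‖ : ℝ) : ℂ) with hf
  have hfm : Measurable f := by
    have h1 : Measurable fun ζ : ℂ => ((h ‖ζ‖ : ℝ) : ℂ) :=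
      Complex.measurable_ofReal.comp (hhm.comp measurable_norm)
    simp only [hf]
    fun_prop
  have hπ : ENNReal.ofReal Real.pi ≠ 0 := by simp [Real.pi_pos]
  set D := ENNReal.ofReal (2 * Real.pi) / ENNReal.ofReal Real.pi with hD
  have hD0 : D ≠ 0 := by
    rw [hD, ENNReal.div_ne_zero]
    exact ⟨by simp [Real.pi_pos], ENNReal.ofReal_ne_top⟩
  have hDt : D ≠ ⊤ := ENNReal.div_ne_top ENNReal.ofReal_ne_top hπ
  have hLf : LpC p v f ≤ (D * X) ^ (1 / p) := by
    unfold LpC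
    refine ENNReal.rpow_le_rpow ?_ hpi.le
    rw [hD, ENNReal.mul_div_right_comm.symm]
    refine ENNReal.div_le_div_right ?_ _
    calc ∫⁻ z in Metric.ball (0:ℂ) 1, ENNReal.ofReal (‖f z‖ ^ p * v ‖z‖)
        ≤ ∫⁻ z in Metric.ball (0:ℂ) 1, (fun s => ENNReal.ofReal (h s ^ p * v s)) ‖z‖ := by
          refine setLIntegral_mono' measurableSet_ball fun z hz => ?_
          rw [mem_ball_zero_iff] at hz
          refine ENNReal.ofReal_le_ofReal (mul_le_mul_of_nonneg_right ?_ (hv0 _))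
          refine Real.rpow_le_rpow (norm_nonneg _) ?_ hp0.le
          rw [hf]
          simp only [norm_mul, norm_pow, Complex.norm_real, Real.norm_of_nonneg (hh0 _)]
          exact mul_le_of_le_one_left (hh0 _) (pow_le_one₀ (norm_nonneg _) hz.le)
      _ = ENNReal.ofReal (2 * Real.pi) *
          ∫⁻ s in Ioo (0:ℝ) 1, ENNReal.ofReal s * ENNReal.ofReal (h s ^ p * v s) :=
          polar_lint _ ((hhm.pow_const p).mul hvm).ennreal_ofReal
      _ ≤ ENNReal.ofReal (2 * Real.pi) * X := by
          gcongr
          calc _ ≤ ∫⁻ s in Ioo (0:ℝ) 1, (Ioo r 1).indicator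
                (fun s => ENNReal.ofReal (s * (T s * min (w s) k))) s := by
                refine setLIntegral_mono' measurableSet_Ioo fun s hs => ?_
                by_cases hsr : s ∈ Ioo r 1
                · rw [indicator_of_mem hsr, hh, indicator_of_mem hsr,
                    ← ENNReal.ofReal_mul hs.1.le]
                  exact ENNReal.ofReal_le_ofReal (mul_le_mul_of_nonneg_left
                    (trunc_pow hp hw0 hv0 k s) hs.1.le)
                · rw [hh, indicator_of_notMem hsr, Real.zero_rpow hp0.ne']
                  simp
            _ = X := by
                rw [setLIntegral_indicator measurableSet_Ioo,
                  inter_eq_self_of_subset_left hsub]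
  have hLf' : LpC p v f < ⊤ := by
    refine hLf.trans_lt ?_
    exact ENNReal.rpow_lt_top_of_nonneg hpi.le (ENNReal.mul_ne_top hDt hXtop)
  have hmain := (hP f hfm hLf').trans (by gcongr : _ ≤ ENNReal.ofReal C * (D * X) ^ (1 / p))
  set A := (∫ s in Ioo (0:ℝ) 1, s ^ (2 * n + 1) * (h s * w s)) / moment w n with hA
  have hAX : Xr / (16 * moment w n) ≤ A := by
    rw [hA, ← div_div]
    refine div_le_div_of_nonneg_right ?_ hM.le
    have e : ∫ s in Ioo (0:ℝ) 1, s ^ (2 * n + 1) * (h s * w s) =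
        ∫ s in Ioo r 1, s ^ (2 * n + 1) * (T s * w s) := by
      have : ∀ s, s ^ (2 * n + 1) * (h s * w s) =
          (Ioo r 1).indicator (fun s => s ^ (2 * n + 1) * (T s * w s)) s := by
        intro s
        by_cases hsr : s ∈ Ioo r 1
        · rw [indicator_of_mem hsr, hh, indicator_of_mem hsr]
        · rw [indicator_of_notMem hsr, hh, indicator_of_notMem hsr]; ring
      simp_rw [this]
      rw [setIntegral_indicator measurableSet_Ioo, inter_eq_self_of_subset_right hsub]
    rw [e, hXr, ← integral_div]
    refine setIntegral_mono_on (hXi.div_const 16)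
      ((pow_mul_integrable hTwi (2*n+1)).mono_set hsub) measurableSet_Ioo fun s hs => ?_
    have hs0 : 0 ≤ s := (hsub hs).1.le
    have h1 : T s * min (w s) k ≤ T s * w s :=
      mul_le_mul_of_nonneg_left (min_le_left _ _) (hT0 s)
    have h3 : (1/16:ℝ) ≤ s ^ (2 * n) := by
      rw [mul_comm, pow_mul]
      have := hn s hs
      nlinarith
    have h2 : 0 ≤ T s * w s := mul_nonneg (hT0 s) (hw0 s)
    calc s * (T s * min (w s) k) / 16 ≤ s * (T s * w s) / 16 := by gcongr
      _ = 1/16 * (s * (T s * w s)) := by ring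
      _ ≤ s ^ (2*n) * (s * (T s * w s)) := by gcongr
      _ = _ := by ring
  have hA0 : 0 ≤ A := le_trans (by positivity) hAX
  have hLP : (D * (ENNReal.ofReal (A / 4) ^ p * N)) ^ (1 / p) ≤ LpC p v (Pw w f) := by
    unfold LpC
    refine ENNReal.rpow_le_rpow ?_ hpi.le
    rw [hD, ENNReal.mul_div_right_comm.symm]
    refine ENNReal.div_le_div_right ?_ _
    calc ENNReal.ofReal (2 * Real.pi) * (ENNReal.ofReal (A / 4) ^ p * N)
        ≤ ENNReal.ofReal (2 * Real.pi) * ∫⁻ s in Ioo (0:ℝ) 1,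
          ENNReal.ofReal s * ENNReal.ofReal ((|s| ^ n * A) ^ p * v s) := by
          gcongr
          rw [hN, ← lintegral_const_mul' _ _
            (ENNReal.rpow_ne_top_of_nonneg hp0.le ENNReal.ofReal_ne_top)]
          refine le_trans (setLIntegral_mono' measurableSet_Ioo fun s hs => ?_)
            (lintegral_mono_set hsub)
          have hs0 : 0 ≤ s := (hsub hs).1.le
          rw [← ENNReal.ofReal_mul hs0, ENNReal.ofReal_rpow_of_nonneg (by positivity) hp0.le,
            ← ENNReal.ofReal_mul (by positivity), abs_of_nonneg hs0]
          refine ENNReal.ofReal_le_ofReal ?_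
          have h1 : (A/4) ^ p ≤ (s ^ n * A) ^ p := by
            refine Real.rpow_le_rpow (by positivity) ?_ hp0.le
            have := mul_le_mul_of_nonneg_right (hn s hs) hA0
            linarith
          calc _ ≤ (s ^ n * A) ^ p * (s * v s) :=
                mul_le_mul_of_nonneg_right h1 (mul_nonneg hs0 (hv0 s))
            _ = _ := by ring
      _ = ∫⁻ z in Metric.ball (0:ℂ) 1,
          (fun s => ENNReal.ofReal ((|s| ^ n * A) ^ p * v s)) ‖z‖ := by
          refine (polar_lint (fun s => ENNReal.ofReal ((|s| ^ n * A) ^ p * v s)) ?_).symm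
          have : Measurable fun s : ℝ => |s| := measurable_norm
          exact ((((this.pow_const n).mul_const A).pow_const p).mul hvm).ennreal_ofReal
      _ = _ := by
          refine setLIntegral_congr_fun measurableSet_ball fun z hz => ?_
          rw [mem_ball_zero_iff] at hz
          simp only
          rw [hf, Pw_formula hw hwm hw0 n hhm hhB hz, norm_mul, norm_pow, Complex.norm_real,
            ← hA, Real.norm_of_nonneg hA0, abs_of_nonneg (norm_nonneg z)]
  have hfin := hLP.trans hmain
  rw [ENNReal.mul_rpow_of_nonneg _ _ hpi.le, ENNReal.mul_rpow_of_nonneg _ _ hpi.le,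
    ENNReal.mul_rpow_of_nonneg _ _ hpi.le, ← ENNReal.rpow_mul, mul_one_div_cancel hp0.ne',
    ENNReal.rpow_one, mul_left_comm (ENNReal.ofReal C)] at hfin
  rw [ENNReal.mul_le_mul_iff_right (by simp [ENNReal.rpow_eq_zero_iff, hD0, hDt])
    (ENNReal.rpow_ne_top_of_nonneg hpi.le hDt)] at hfin
  by_cases hX0 : X = 0
  · rw [hX0, ENNReal.zero_rpow_of_pos (by linarith)]; simp
  have hXsplit : X = X ^ (1/p) * X ^ (1 - 1/p) := by
    rw [← ENNReal.rpow_add _ _ hX0 hXtop]; simp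
  have h64 : X ≤ ENNReal.ofReal (64 * moment w n) * ENNReal.ofReal (A / 4) := by
    rw [← hXX, ← ENNReal.ofReal_mul (by positivity)]
    refine ENNReal.ofReal_le_ofReal ?_
    rw [div_le_iff₀ (by positivity)] at hAX
    linarith
  have hc : X ^ (1/p) * (N ^ (1/p) * X ^ (1 - 1/p)) ≤
      X ^ (1/p) * ENNReal.ofReal (64 * C * moment w n) := by
    calc X ^ (1/p) * (N ^ (1/p) * X ^ (1 - 1/p)) = X * N ^ (1/p) := by
          conv_rhs => rw [hXsplit]
          ring
      _ ≤ ENNReal.ofReal (64 * moment w n) * ENNReal.ofReal (A / 4) * N ^ (1/p) := by gcongr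
      _ = ENNReal.ofReal (64 * moment w n) * (ENNReal.ofReal (A / 4) * N ^ (1/p)) := by ring
      _ ≤ ENNReal.ofReal (64 * moment w n) * (ENNReal.ofReal C * X ^ (1/p)) := by gcongr
      _ = X ^ (1/p) * ENNReal.ofReal (64 * C * moment w n) := by
          rw [← mul_assoc, ← ENNReal.ofReal_mul (by positivity), mul_comm]
          congr 2; ring
  rwa [ENNReal.mul_le_mul_iff_right (by simp [ENNReal.rpow_eq_zero_iff, hX0, hXtop])
    (ENNReal.rpow_ne_top_of_nonneg hpi.le hXtop)] at hc

lemma trunc_tendsto {p : ℝ} (hp : 1 < p) {w v : ℝ → ℝ} (hw0 : ∀ s, 0 ≤ w s)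
    (hv0 : ∀ s, 0 ≤ v s) (s : ℝ) :
    Filter.Tendsto (fun k : ℕ => ENNReal.ofReal (trunc p w v k s * min (w s) k)) Filter.atTop
      (nhds (sigmaE p w v s)) := by
  have hp0 : 0 < p := by linarith
  have hp1 : 0 < p - 1 := by linarith
  have hq : 0 < p / (p - 1) := by positivity
  have ha : 0 < 1 / (p - 1) := by positivity
  unfold sigmaE
  rcases (hw0 s).eq_or_lt with hws | hws
  · rw [← hws]
    have : ∀ k : ℕ, trunc p w v k s * min 0 (k:ℝ) = 0 := by
      intro k; rw [min_eq_left (by positivity)]; ring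
    simp_rw [this]
    simp [hq]
  have hev : ∀ᶠ k : ℕ in Filter.atTop, min (w s) (k:ℝ) = w s := by
    obtain ⟨k0, hk0⟩ := exists_nat_ge (w s)
    filter_upwards [Filter.eventually_ge_atTop k0] with k hk
    exact min_eq_left (hk0.trans (by exact_mod_cast hk))
  have hev2 : ∀ᶠ k : ℕ in Filter.atTop,
      (w s / (v s + 1 / ((k:ℝ) + 1))) ^ (1 / (p - 1)) * w s =
      trunc p w v k s * min (w s) k := by
    filter_upwards [hev] with k hk
    unfold trunc
    rw [hk]
  rcases (hv0 s).eq_or_lt with hvs | hvs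
  · rw [← hvs]
    have e : (ENNReal.ofReal (w s) / ENNReal.ofReal 0 ^ (1 / p)) ^ (p / (p - 1)) = ⊤ := by
      rw [ENNReal.ofReal_zero, ENNReal.zero_rpow_of_pos (by positivity),
        ENNReal.div_zero (by simpa using hws), ENNReal.top_rpow_of_pos hq]
    rw [e]
    refine ENNReal.tendsto_ofReal_atTop.comp (Filter.Tendsto.congr' hev2 ?_)
    refine Filter.Tendsto.atTop_mul_const hws ?_
    refine (tendsto_rpow_atTop ha).comp ?_
    rw [← hvs]
    have : ∀ k : ℕ, w s / (0 + 1 / ((k:ℝ) + 1)) = w s * ((k:ℝ) + 1) := by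
      intro k; simp
    simp_rw [this]
    refine Filter.Tendsto.const_mul_atTop hws ?_
    exact Filter.tendsto_atTop_add_const_right _ _ tendsto_natCast_atTop_atTop
  · have e : (ENNReal.ofReal (w s) / ENNReal.ofReal (v s) ^ (1 / p)) ^ (p / (p - 1)) =
        ENNReal.ofReal ((w s / (v s + 0)) ^ (1 / (p - 1)) * w s) := by
      rw [ENNReal.ofReal_rpow_of_pos hvs, ← ENNReal.ofReal_div_of_pos (by positivity),
        ENNReal.ofReal_rpow_of_nonneg (by positivity) hq.le]
      congr 1
      rw [add_zero, Real.div_rpow hws.le (by positivity), Real.div_rpow hws.le hvs.le,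
        ← Real.rpow_mul hvs.le]
      have e1 : 1 / p * (p / (p-1)) = 1 / (p-1) := by field_simp
      have e2 : p / (p-1) = 1 / (p-1) + 1 := by field_simp; ring
      rw [e1, e2, Real.rpow_add hws, Real.rpow_one]
      ring
    rw [e]
    refine ENNReal.tendsto_ofReal (Filter.Tendsto.congr' hev2 ?_)
    refine Filter.Tendsto.mul_const _ ?_
    refine Filter.Tendsto.rpow_const ?_ (Or.inr ha.le)
    refine tendsto_const_nhds.div (tendsto_const_nhds.add ?_) (by linarith)
    exact tendsto_one_div_add_atTop_nhds_zero_nat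

lemma main_meas {p : ℝ} (hp : 1 < p) {w v : ℝ → ℝ} (hw : IsRadialWeight w)
    (hv : IsRadialWeight v) (hD : Dhat w)
    (hwm : Measurable w) (hvm : Measurable v) (hw0 : ∀ s, 0 ≤ w s) (hv0 : ∀ s, 0 ≤ v s)
    {C : ℝ} (hC : 0 < C)
    (hP : ∀ f : ℂ → ℂ, Measurable f → LpC p v f < ⊤ →
      LpC p v (Pw w f) ≤ ENNReal.ofReal C * LpC p v f) :
    ApE p w v < ⊤ := by
  obtain ⟨K, hK, hKr⟩ := moment_hat hw hD
  have hp0 : 0 < p := by linarith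
  have hpi : 0 < 1 / p := by positivity
  have hpi1 : 1 / p < 1 := by rw [div_lt_one hp0]; exact hp
  have hqi : 0 < 1 - 1/p := by linarith
  refine lt_of_le_of_lt (b := ENNReal.ofReal (64 * C * K)) ?_ ENNReal.ofReal_lt_top
  unfold ApE
  refine iSup₂_le fun r hr => ?_
  obtain ⟨n, hn, hmn⟩ := hKr r hr
  have hM := moment_pos hw n
  have hat0 : 0 < hat1 w r := by
    by_contra hneg
    push Not at hneg
    nlinarith
  rw [ENNReal.div_le_iff (by simpa using hat0) ENNReal.ofReal_ne_top,
    ← ENNReal.ofReal_mul (by positivity)]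
  set N := ∫⁻ s in Ioo r 1, ENNReal.ofReal (s * v s) with hN
  have hbound : ∀ k : ℕ, N ^ (1/p) *
      (∫⁻ s in Ioo r 1, ENNReal.ofReal (s * (trunc p w v k s * min (w s) k))) ^ (1 - 1 / p) ≤
      ENNReal.ofReal (64 * C * K * hat1 w r) := by
    intro k
    refine (core hp hw hwm hvm hw0 hv0 hC hP hr hn k).trans (ENNReal.ofReal_le_ofReal ?_)
    rw [mul_assoc (64 * C)]
    gcongr
  set B := ENNReal.ofReal (64 * C * K * hat1 w r) with hB
  by_cases hN0 : N = 0
  · rw [hN0, ENNReal.zero_rpow_of_pos hpi, zero_mul]; exact bot_le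
  have hNt : N ≠ ⊤ := by
    have h1 : ∫⁻ s in Ioo (0:ℝ) 1, ENNReal.ofReal (v s) < ⊤ := by
      have := (rw_integrable hv).2
      rwa [hasFiniteIntegral_iff_ofReal (ae_of_all _ hv0)] at this
    refine (lt_of_le_of_lt (le_trans ?_ (lintegral_mono_set (Ioo_subset_Ioo_left hr.1))) h1).ne
    refine setLIntegral_mono' measurableSet_Ioo fun s hs => ENNReal.ofReal_le_ofReal ?_
    exact mul_le_of_le_one_left (hv0 s) hs.2.le
  have hNp0 : N ^ (1/p) ≠ 0 := by simp [ENNReal.rpow_eq_zero_iff, hN0, hNt]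
  have hNpt : N ^ (1/p) ≠ ⊤ := ENNReal.rpow_ne_top_of_nonneg hpi.le hNt
  have hX : ∀ k : ℕ,
      (∫⁻ s in Ioo r 1, ENNReal.ofReal (s * (trunc p w v k s * min (w s) k))) ≤
      (B / N ^ (1/p)) ^ (1 - 1/p)⁻¹ := by
    intro k
    rw [ENNReal.le_rpow_inv_iff hqi, ENNReal.le_div_iff_mul_le (Or.inl hNp0) (Or.inl hNpt),
      mul_comm]
    exact hbound k
  have hS : ∫⁻ s in Ioo r 1, ENNReal.ofReal s * sigmaE p w v s ≤
      (B / N ^ (1/p)) ^ (1 - 1/p)⁻¹ := by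
    calc _ = ∫⁻ s in Ioo r 1, Filter.liminf (fun k : ℕ =>
          ENNReal.ofReal (s * (trunc p w v k s * min (w s) k))) Filter.atTop := by
          refine setLIntegral_congr_fun measurableSet_Ioo fun s hs => ?_
          have hs0 : 0 ≤ s := hr.1.trans hs.1.le
          refine (Filter.Tendsto.liminf_eq ?_).symm
          simp_rw [ENNReal.ofReal_mul hs0]
          exact ENNReal.Tendsto.const_mul (trunc_tendsto hp hw0 hv0 s)
            (Or.inr ENNReal.ofReal_ne_top)
      _ ≤ Filter.liminf (fun k : ℕ => ∫⁻ s in Ioo r 1,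
          ENNReal.ofReal (s * (trunc p w v k s * min (w s) k))) Filter.atTop := by
          refine lintegral_liminf_le fun k => ?_
          exact (measurable_id.mul ((trunc_meas p hwm hvm k).mul
            (hwm.min measurable_const))).ennreal_ofReal
      _ ≤ _ := by
          refine Filter.liminf_le_of_frequently_le' (Filter.Frequently.of_forall hX)
  rw [ENNReal.le_rpow_inv_iff hqi] at hS
  calc _ ≤ N ^ (1/p) * (B / N ^ (1/p)) := by gcongr
    _ ≤ B := ENNReal.mul_div_le

lemma exists_meas_version {w : ℝ → ℝ} (hw : IsRadialWeight w) :
    ∃ w' : ℝ → ℝ, Measurable w' ∧ (∀ s, 0 ≤ w' s) ∧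
      w' =ᵐ[volume.restrict (Ico (0:ℝ) 1)] w := by
  have hm : AEMeasurable w (volume.restrict (Ico (0:ℝ) 1)) := hw.2.1.aemeasurable
  refine ⟨fun s => max (hm.mk w s) 0, hm.measurable_mk.max measurable_const,
    fun s => le_max_right _ _, ?_⟩
  filter_upwards [hm.ae_eq_mk, ae_restrict_mem measurableSet_Ico] with s hs hs'
  rw [← hs, max_eq_left (hw.1 s hs')]

lemma ae_Ioo_of_Ico {P : ℝ → Prop} (h : ∀ᵐ s ∂(volume.restrict (Ico (0:ℝ) 1)), P s)
    {r : ℝ} (hr : 0 ≤ r) : ∀ᵐ s ∂(volume.restrict (Ioo r 1)), P s :=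
  ae_restrict_of_ae_restrict_of_subset
    (show Ioo r 1 ⊆ Ico (0:ℝ) 1 from fun _ hx => ⟨hr.trans hx.1.le, hx.2⟩) h

lemma hatw_congr {w w' : ℝ → ℝ} (h : w' =ᵐ[volume.restrict (Ico (0:ℝ) 1)] w) {r : ℝ}
    (hr : 0 ≤ r) : hatw w' r = hatw w r :=
  integral_congr_ae (ae_Ioo_of_Ico h hr)

lemma IsRadialWeight.congr' {w w' : ℝ → ℝ} (hw : IsRadialWeight w)
    (h : w' =ᵐ[volume.restrict (Ico (0:ℝ) 1)] w) (h0 : ∀ s, 0 ≤ w' s) : IsRadialWeight w' := by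
  refine ⟨fun s _ => h0 s, Integrable.congr hw.2.1 h.symm, fun r hr => ?_⟩
  rw [hatw_congr h hr.1]; exact hw.2.2 r hr

lemma LpC_congr (p : ℝ) {v v' : ℝ → ℝ} (h : v' =ᵐ[volume.restrict (Ico (0:ℝ) 1)] v)
    (f : ℂ → ℂ) : LpC p v' f = LpC p v f := by
  unfold LpC
  congr 2
  refine lintegral_congr_ae ?_
  filter_upwards [ae_radial (ae_Ioo_of_Ico h le_rfl)] with z hz
  rw [hz]

lemma Pw_congr {w w' : ℝ → ℝ} (h : w' =ᵐ[volume.restrict (Ico (0:ℝ) 1)] w)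
    (f : ℂ → ℂ) : Pw w' f = Pw w f := by
  have hm : moment w' = moment w := by
    funext n
    refine integral_congr_ae ?_
    filter_upwards [ae_Ioo_of_Ico h le_rfl] with s hs
    rw [hs]
  funext z
  unfold Pw Bker
  rw [hm]
  congr 1
  refine integral_congr_ae ?_
  filter_upwards [ae_radial (ae_Ioo_of_Ico h le_rfl)] with z hz
  rw [hz]

lemma ApE_congr (p : ℝ) {w w' v v' : ℝ → ℝ} (h : w' =ᵐ[volume.restrict (Ico (0:ℝ) 1)] w)
    (h' : v' =ᵐ[volume.restrict (Ico (0:ℝ) 1)] v) : ApE p w' v' = ApE p w v := by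
  unfold ApE
  refine iSup_congr fun r => iSup_congr fun hr => ?_
  have hwr := ae_Ioo_of_Ico h hr.1
  have hvr := ae_Ioo_of_Ico h' hr.1
  congr 1
  · congr 2
    · refine lintegral_congr_ae ?_
      filter_upwards [hvr] with s hs
      rw [hs]
    · refine lintegral_congr_ae ?_
      filter_upwards [hvr, hwr] with s hs hs'
      unfold sigmaE
      rw [hs, hs']
  · congr 1
    refine integral_congr_ae ?_
    filter_upwards [hwr] with s hs
    rw [hs]

/-- Lemma B. Let `1 < p < ∞`, let `ω` be a radial weight in the class `D̂`,
and let `ν` be a radial weight. If the Bergman projection `P_ω` is bounded on `L^p_ν`,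
then `A_p(ω,ν) < ∞`. -/
theorem necessity_of_Ap (p : ℝ) (hp : 1 < p) (w v : ℝ → ℝ)
    (hw : IsRadialWeight w) (hv : IsRadialWeight v) (hwD : Dhat w)
    (hP : PwBounded p w v) :
    ApE p w v < ⊤ := by
  obtain ⟨w', hwm, hw0, hww⟩ := exists_meas_version hw
  obtain ⟨v', hvm, hv0, hvv⟩ := exists_meas_version hv
  obtain ⟨C, hC, hCf⟩ := hP
  rw [← ApE_congr p hww hvv]
  refine main_meas hp (hw.congr' hww hw0) (hv.congr' hvv hv0) ?_ hwm hvm hw0 hv0 hC ?_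
  · obtain ⟨D, hD⟩ := hwD
    refine ⟨D, fun r hr => ?_⟩
    rw [hatw_congr hww hr.1, hatw_congr hww (by linarith [hr.1])]
    exact hD r hr
  · intro f hf hlt
    rw [LpC_congr p hvv] at hlt
    rw [LpC_congr p hvv, LpC_congr p hvv, Pw_congr hww]
    exact (hCf f hf hlt).2

end
end

section
/- Let 1 < p < ∞ and let ω and ν be radial weights. Suppose that for every f ∈ L^p_ν the integral ∫_𝔻 |f(ζ)| |B_z^ω(ζ)| ω(ζ) dA(ζ) is finite for almost every z ∈ 𝔻. Then L^p_ν ⊆ L¹_ω and there exists a constant C > 0 such that ‖f‖_{L¹_ω} ≤ C ‖f‖_{L^p_ν} for every f ∈ L^p_ν. -/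
open MeasureTheory Set Metric
open scoped ENNReal NNReal

noncomputable section

/-- The `L¹_ω` norm of `f`. -/
def L1w (w : ℝ → ℝ) (f : ℂ → ℂ) : ℝ≥0∞ :=
  (∫⁻ z in Metric.ball (0:ℂ) 1, ENNReal.ofReal (‖f z‖ * w ‖z‖)) / ENNReal.ofReal Real.pi


theorem moment_integrable {w : ℝ → ℝ} (hw : IsRadialWeight w) (k : ℕ) :
    IntegrableOn (fun r => r ^ k * w r) (Ioo (0:ℝ) 1) := by
  have h : IntegrableOn w (Ioo (0:ℝ) 1) := hw.2.1.mono_set Ioo_subset_Ico_self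
  refine Integrable.mono h ((by fun_prop : AEStronglyMeasurable (fun r : ℝ => r ^ k) _).mul
    h.aestronglyMeasurable) ?_
  filter_upwards [ae_restrict_mem measurableSet_Ioo] with r hr
  rw [norm_mul, norm_pow, Real.norm_of_nonneg hr.1.le]
  exact mul_le_of_le_one_left (norm_nonneg _) (pow_le_one₀ hr.1.le hr.2.le)

theorem moment_lower {w : ℝ → ℝ} (hw : IsRadialWeight w) (n : ℕ) :
    (1/2:ℝ) ^ (2 * n + 1) * hatw w (1/2) ≤ moment w n := by
  have hint := moment_integrable hw (2 * n + 1)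
  have hsub : Ioo (1/2:ℝ) 1 ⊆ Ioo 0 1 := Ioo_subset_Ioo_left (by norm_num)
  have h : IntegrableOn w (Ioo (1/2:ℝ) 1) := hw.2.1.mono_set (hsub.trans Ioo_subset_Ico_self)
  unfold hatw moment
  rw [← integral_const_mul]
  calc _ ≤ ∫ r in Ioo (1/2:ℝ) 1, r ^ (2 * n + 1) * w r := by
        refine setIntegral_mono_on (h.const_mul _) (hint.mono_set hsub) measurableSet_Ioo ?_
        intro r hr
        refine mul_le_mul_of_nonneg_right ?_ (hw.1 r ⟨by linarith [hr.1], hr.2⟩)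
        exact pow_le_pow_left₀ (by norm_num) hr.1.le _
    _ ≤ _ := by
        refine setIntegral_mono_set hint ?_ hsub.eventuallyLE
        filter_upwards [ae_restrict_mem measurableSet_Ioo] with r hr
        exact mul_nonneg (pow_nonneg hr.1.le _) (hw.1 r ⟨hr.1.le, hr.2⟩)

theorem Bker_lower {w : ℝ → ℝ} (hw : IsRadialWeight w) :
    ∃ ε > (0:ℝ), ε ≤ 1 ∧ ∃ c > (0:ℝ), ∀ z ζ : ℂ, ‖z‖ < ε → ‖ζ‖ < 1 → c ≤ ‖Bker w z ζ‖ := by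
  set D := hatw w (1/2) with hDdef
  have hD : 0 < D := hw.2.2 _ (by norm_num)
  have hm : ∀ n, 0 < moment w n := fun n => lt_of_lt_of_le (by positivity) (moment_lower hw n)
  set m := moment w 0 with hmdef
  have hm0 : 0 < m := hm 0
  set t := min (1/8:ℝ) (D / (32 * m)) with ht
  have ht0 : 0 < t := lt_min (by norm_num) (by positivity)
  have ht1 : t ≤ 1/8 := min_le_left _ _
  have ht2 : t ≤ D / (32 * m) := min_le_right _ _
  refine ⟨t, ht0, by linarith, 1 / (4 * m), by positivity, fun z ζ hz hζ => ?_⟩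
  set u : ℕ → ℂ := fun n => ((starRingEnd ℂ) z * ζ) ^ n / ((2 * moment w n : ℝ) : ℂ) with hu
  have hq : ‖(starRingEnd ℂ) z * ζ‖ ≤ t := by
    rw [norm_mul, RCLike.norm_conj]
    nlinarith [norm_nonneg z, norm_nonneg ζ]
  have hun : ∀ n, ‖u n‖ ≤ (4 * t) ^ n / D := by
    intro n
    simp only [hu]
    rw [norm_div, norm_pow, Complex.norm_real, Real.norm_of_nonneg (by linarith [hm n]),
      div_le_div_iff₀ (by linarith [hm n]) hD]
    have h1 := moment_lower hw n
    have h2 : ‖(starRingEnd ℂ) z * ζ‖ ^ n ≤ t ^ n := pow_le_pow_left₀ (norm_nonneg _) hq n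
    have h3 : (4 * t) ^ n * (2 * ((1/2:ℝ) ^ (2 * n + 1) * D)) = t ^ n * D := by
      rw [mul_pow, pow_succ, pow_mul]
      have : (4:ℝ) ^ n * ((1/2:ℝ)^2) ^ n = 1 := by rw [← mul_pow]; norm_num
      linear_combination (t ^ n * D) * this
    calc _ ≤ t ^ n * D := by gcongr
      _ = _ := h3.symm
      _ ≤ _ := by gcongr
  have h4t : 4 * t < 1 := by linarith
  have hgeo : HasSum (fun n => (4 * t) ^ (n + 1) / D) (4 * t * (1 - 4 * t)⁻¹ / D) := by
    have := ((hasSum_geometric_of_lt_one (by positivity) h4t).mul_left (4 * t)).div_const D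
    simpa [pow_succ'] using this
  have hsum : Summable u := Summable.of_norm_bounded
    ((summable_geometric_of_lt_one (by positivity) h4t).div_const D) hun
  have htail : ‖∑' n, u (n + 1)‖ ≤ 4 * t * (1 - 4 * t)⁻¹ / D :=
    tsum_of_norm_bounded hgeo fun n => hun (n + 1)
  have hB : Bker w z ζ = u 0 + ∑' n, u (n + 1) := hsum.tsum_eq_zero_add
  have hu0 : ‖u 0‖ = 1 / (2 * m) := by
    simp only [hu, pow_zero]
    rw [norm_div, Complex.norm_real, Real.norm_of_nonneg (by linarith [hm 0]), norm_one]
  have hfin : 4 * t * (1 - 4 * t)⁻¹ / D ≤ 1 / (4 * m) := by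
    have h1 : (1 - 4 * t)⁻¹ ≤ 2 := by
      rw [inv_le_comm₀ (by linarith) (by norm_num)]; linarith
    have h2 : t * (32 * m) ≤ D := (le_div_iff₀ (by positivity)).1 ht2
    rw [div_le_div_iff₀ hD (by positivity)]
    calc 4 * t * (1 - 4 * t)⁻¹ * (4 * m) ≤ 4 * t * 2 * (4 * m) := by gcongr
      _ ≤ 1 * D := by linarith
  have htri : ‖u 0‖ - ‖∑' n, u (n + 1)‖ ≤ ‖Bker w z ζ‖ := by
    rw [hB]
    have := norm_sub_norm_le (u 0) (-∑' n, u (n + 1))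
    simpa using this
  have : 1 / (2 * m) = 1 / (4 * m) + 1 / (4 * m) := by field_simp; norm_num
  linarith

theorem qmp_norm : Measure.QuasiMeasurePreserving (fun z : ℂ => ‖z‖)
    (volume.restrict (Metric.ball (0:ℂ) 1)) (volume.restrict (Set.Ico (0:ℝ) 1)) := by
  refine ⟨measurable_norm, ?_⟩
  refine Measure.AbsolutelyContinuous.mk fun s hs h0 => ?_
  rw [Measure.restrict_apply hs] at h0
  rw [Measure.map_apply measurable_norm hs, Measure.restrict_apply (measurable_norm hs)]
  set T := s ∩ Ico (0:ℝ) 1 with hT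
  have hTm : MeasurableSet T := hs.inter measurableSet_Ico
  have hsub : (fun z : ℂ => ‖z‖) ⁻¹' s ∩ ball (0:ℂ) 1 = (fun z : ℂ => ‖z‖) ⁻¹' T := by
    ext z; simp [hT]
  rw [hsub, ← lintegral_indicator_one (measurable_norm hTm),
    ← Complex.lintegral_comp_polarCoord_symm]
  have hnull : ∀ᵐ q : ℝ × ℝ, q.1 ∉ T := by
    have h1 : ∀ᵐ x : ℝ, x ∉ T := by simpa [ae_iff] using h0
    exact Measure.quasiMeasurePreserving_fst.ae h1
  rw [lintegral_eq_zero_of_ae_eq_zero]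
  filter_upwards [ae_restrict_of_ae hnull, ae_restrict_mem polarCoord.open_target.measurableSet]
    with q hq hq2
  have hq0 : 0 < q.1 := by
    simp only [polarCoord_target, mem_prod, mem_Ioi] at hq2
    exact hq2.1
  have : ‖Complex.polarCoord.symm q‖ ∉ T := by
    rw [Complex.norm_polarCoord_symm, abs_of_pos hq0]; exact hq
  simp only [smul_eq_mul, Pi.zero_apply]
  rw [indicator_of_notMem (by simpa using this), mul_zero]

theorem ac_of_embed {μ ν : Measure ℂ} (hat : ∀ x, μ {x} = 0) {p : ℝ} (hp : 0 < p)
    (H : ∀ f : ℂ → ℂ, Measurable f → ∫⁻ z, ‖f z‖ₑ ^ p ∂ν < ⊤ → ∫⁻ z, ‖f z‖ₑ ∂μ < ⊤) :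
    μ ≪ ν := by
  refine Measure.AbsolutelyContinuous.mk fun N hN h0 => ?_
  by_contra hne
  -- every function supported on `N` is integrable
  have H' : ∀ g : ℂ → ℝ, Measurable g → ∫⁻ z in N, ‖g z‖ₑ ∂μ < ⊤ := by
    intro g hg
    have := H (N.indicator fun z => (g z : ℂ)) ((Complex.measurable_ofReal.comp hg).indicator hN) ?_
    · rw [← lintegral_indicator hN]
      refine lt_of_le_of_lt (lintegral_mono fun z => ?_) this
      by_cases hz : z ∈ N <;> simp [hz, enorm_eq_nnnorm]
    · have : ∫⁻ z, ‖N.indicator (fun z => (g z : ℂ)) z‖ₑ ^ p ∂ν = 0 := by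
        rw [lintegral_eq_zero_iff']
        · have : ∀ᵐ z ∂ν, z ∉ N := by simpa [ae_iff] using h0
          filter_upwards [this] with z hz
          simp [hz, hp]
        · exact ((((Complex.measurable_ofReal.comp hg).indicator hN).enorm).pow_const p).aemeasurable
      rw [this]; simp
  have hfin : μ N < ⊤ := by
    have := H' (fun _ => 1) measurable_const
    simpa using this
  obtain ⟨x, hx, hpos⟩ := exists_mem_forall_mem_nhdsWithin_pos_measure hne
  set F : ℝ → ℝ := fun r => (μ (N ∩ closedBall x r)).toReal with hF
  have hlt : ∀ r, μ (N ∩ closedBall x r) < ⊤ := fun r =>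
    (measure_mono inter_subset_left).trans_lt hfin
  have hFm : Monotone F := fun a b hab =>
    ENNReal.toReal_mono (hlt b).ne (measure_mono (inter_subset_inter_right _ (closedBall_subset_closedBall hab)))
  have hFpos : ∀ r, 0 < r → 0 < F r := fun r hr => by
    refine ENNReal.toReal_pos (hpos _ ?_).ne' (hlt r).ne
    rw [inter_comm]
    exact Filter.inter_mem (mem_nhdsWithin_of_mem_nhds (closedBall_mem_nhds x hr))
      self_mem_nhdsWithin
  have hgm : Measurable (fun z => (F (dist z x))⁻¹) :=
    (hFm.measurable.comp (by fun_prop)).inv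
  have hI := H' _ hgm
  obtain ⟨δ, hδ, hsm⟩ := exists_pos_setLIntegral_lt_of_measure_lt hI.ne one_ne_zero
  have htend : Filter.Tendsto (fun n : ℕ => μ (N ∩ closedBall x (1 / ((n:ℝ) + 1)))) Filter.atTop
      (nhds 0) := by
    have := tendsto_measure_iInter_atTop (μ := μ)
      (s := fun n : ℕ => N ∩ closedBall x (1 / ((n:ℝ) + 1)))
      (fun n => (hN.inter measurableSet_closedBall).nullMeasurableSet)
      (fun a b hab => inter_subset_inter_right _ (closedBall_subset_closedBall (by gcongr)))
      ⟨0, (hlt _).ne⟩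
    have h00 : μ (⋂ n : ℕ, N ∩ closedBall x (1 / ((n:ℝ) + 1))) = 0 := ?_
    · rw [h00] at this
      exact this
    refine measure_mono_null (t := {x}) ?_ (hat x)
    intro y hy
    simp only [mem_iInter, mem_inter_iff, mem_closedBall] at hy
    have : dist y x ≤ 0 := ge_of_tendsto' tendsto_one_div_add_atTop_nhds_zero_nat fun n => (hy n).2
    simpa using this
  obtain ⟨n, hn⟩ := (htend.eventually (gt_mem_nhds hδ)).exists
  set r : ℝ := 1 / ((n:ℝ) + 1) with hr
  have hr0 : 0 < r := by positivity
  have h1 := hsm (closedBall x r) (by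
    rw [Measure.restrict_apply measurableSet_closedBall, inter_comm]; exact hn)
  rw [Measure.restrict_restrict measurableSet_closedBall, inter_comm] at h1
  refine absurd h1 (not_lt.2 ?_)
  calc (1:ℝ≥0∞) = ∫⁻ z in N ∩ closedBall x r, ENNReal.ofReal (F r)⁻¹ ∂μ := by
        rw [lintegral_const, Measure.restrict_apply_univ, ENNReal.ofReal_inv_of_pos (hFpos r hr0),
          hF, ENNReal.ofReal_toReal (hlt r).ne, ENNReal.inv_mul_cancel _ (hlt r).ne]
        intro h
        have := hFpos r hr0
        simp [hF, h] at this
    _ ≤ _ := by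
        refine lintegral_mono_ae ?_
        have hx' : ∀ᵐ z ∂(μ.restrict (N ∩ closedBall x r)), z ≠ x := by
          refine ae_restrict_of_ae ?_
          simp [ae_iff, hat]
        filter_upwards [hx', ae_restrict_mem (hN.inter measurableSet_closedBall)] with z hz hz2
        have hd : 0 < dist z x := dist_pos.2 hz
        rw [Real.enorm_of_nonneg (inv_nonneg.2 (hFpos _ hd).le)]
        refine ENNReal.ofReal_le_ofReal ?_
        exact inv_anti₀ (hFpos _ hd) (hFm hz2.2)

theorem bdd_of_embed {μ ν : Measure ℂ} (hac : μ ≪ ν) {p : ℝ} (hp : 0 < p)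
    (H : ∀ f : ℂ → ℂ, Measurable f → ∫⁻ z, ‖f z‖ₑ ^ p ∂ν < ⊤ → ∫⁻ z, ‖f z‖ₑ ∂μ < ⊤) :
    ∃ C : ℝ≥0∞, C < ⊤ ∧ ∀ f : ℂ → ℂ, Measurable f → ∫⁻ z, ‖f z‖ₑ ^ p ∂ν < ⊤ →
      ∫⁻ z, ‖f z‖ₑ ∂μ ≤ C * (∫⁻ z, ‖f z‖ₑ ^ p ∂ν) ^ (1 / p) := by
  by_contra! hcon
  have hp' : 0 < 1 / p := by positivity
  have hb : ∀ n : ℕ, ((2:ℝ≥0∞)⁻¹ ^ n) ≠ 0 ∧ ((2:ℝ≥0∞)⁻¹ ^ n) ≠ ⊤ := fun n => by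
    constructor <;> simp
  choose f hfm hfi hflt using fun n : ℕ => hcon ((n:ℝ≥0∞) * (((2:ℝ≥0∞)⁻¹ ^ n) ^ (1/p))⁻¹) (by
    refine ENNReal.mul_lt_top (by simp) ?_
    rw [ENNReal.inv_lt_top]
    exact ENNReal.rpow_pos (pos_iff_ne_zero.2 (hb n).1) (hb n).2)
  set a : ℕ → ℝ≥0∞ := fun n => ∫⁻ z, ‖f n z‖ₑ ^ p ∂ν with ha
  have hpm : ∀ n, Measurable fun z => ‖f n z‖ₑ ^ p := fun n => (hfm n).enorm.pow_const p
  have ha0 : ∀ n, a n ≠ 0 := by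
    intro n h
    have h2 : (fun z => ‖f n z‖ₑ ^ p) =ᵐ[ν] 0 := (lintegral_eq_zero_iff (hpm n)).1 h
    have h3 : ∫⁻ z, ‖f n z‖ₑ ∂μ = 0 := by
      rw [lintegral_eq_zero_iff (hfm n).enorm]
      filter_upwards [hac.ae_le h2] with z hz
      simpa [hp, hp.le, hp.not_gt] using hz
    have := hflt n
    rw [h3] at this
    simp at this
  set S : ℂ → ℝ≥0∞ := fun z => ∑' n, (2:ℝ≥0∞)⁻¹ ^ n * (a n)⁻¹ * ‖f n z‖ₑ ^ p with hS
  have hSm : Measurable S := Measurable.tsum fun n => (hpm n).const_mul _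
  have hSi : ∫⁻ z, S z ∂ν = 2 := by
    rw [hS, lintegral_tsum fun n => ((hpm n).const_mul _).aemeasurable]
    have : ∀ n, ∫⁻ z, (2:ℝ≥0∞)⁻¹ ^ n * (a n)⁻¹ * ‖f n z‖ₑ ^ p ∂ν = (2:ℝ≥0∞)⁻¹ ^ n := by
      intro n
      rw [lintegral_const_mul _ (hpm n), mul_assoc, ENNReal.inv_mul_cancel (ha0 n) (hfi n).ne, mul_one]
    simp_rw [this]
    rw [ENNReal.tsum_geometric]
    simp
  have hSfin : ∀ᵐ z ∂ν, S z < ⊤ := ae_lt_top hSm (by rw [hSi]; simp)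
  set F : ℂ → ℂ := fun z => (((S z) ^ (1/p)).toReal : ℂ) with hF
  have hFm : Measurable F := Complex.measurable_ofReal.comp (hSm.pow_const _).ennreal_toReal
  have hFe : ∀ z, S z < ⊤ → ‖F z‖ₑ = S z ^ (1/p) := by
    intro z hz
    have h : S z ^ (1/p) ≠ ⊤ := ENNReal.rpow_ne_top_of_nonneg hp'.le hz.ne
    rw [show ‖F z‖ₑ = ‖(S z ^ (1 / p)).toReal‖ₑ by simp [hF, enorm_eq_nnnorm]]
    rw [Real.enorm_of_nonneg ENNReal.toReal_nonneg, ENNReal.ofReal_toReal h]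
  have hM := H F hFm (by
    have : ∫⁻ z, ‖F z‖ₑ ^ p ∂ν = ∫⁻ z, S z ∂ν := by
      refine lintegral_congr_ae ?_
      filter_upwards [hSfin] with z hz
      rw [hFe z hz, ← ENNReal.rpow_mul, one_div_mul_cancel hp.ne', ENNReal.rpow_one]
    rw [this, hSi]; simp)
  have hge : ∀ n : ℕ, (n:ℝ≥0∞) ≤ ∫⁻ z, ‖F z‖ₑ ∂μ := by
    intro n
    set b : ℝ≥0∞ := ((2:ℝ≥0∞)⁻¹ ^ n) ^ (1/p) with hbdef
    have hb0 : b ≠ 0 := (ENNReal.rpow_pos (pos_iff_ne_zero.2 (hb n).1) (hb n).2).ne'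
    have hbt : b ≠ ⊤ := ENNReal.rpow_ne_top_of_nonneg hp'.le (hb n).2
    have hA0 : a n ^ (1/p) ≠ 0 := (ENNReal.rpow_pos (pos_iff_ne_zero.2 (ha0 n)) (hfi n).ne).ne'
    have hAt : a n ^ (1/p) ≠ ⊤ := ENNReal.rpow_ne_top_of_nonneg hp'.le (hfi n).ne
    calc (n:ℝ≥0∞) = b * (a n ^ (1/p))⁻¹ * ((n:ℝ≥0∞) * b⁻¹ * a n ^ (1/p)) := by
          calc (n:ℝ≥0∞) = n * (b * b⁻¹) * ((a n ^ (1/p))⁻¹ * a n ^ (1/p)) := by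
                rw [ENNReal.mul_inv_cancel hb0 hbt, ENNReal.inv_mul_cancel hA0 hAt]; simp
            _ = _ := by ring
      _ ≤ b * (a n ^ (1/p))⁻¹ * ∫⁻ z, ‖f n z‖ₑ ∂μ := by gcongr; exact (hflt n).le
      _ = ∫⁻ z, b * (a n ^ (1/p))⁻¹ * ‖f n z‖ₑ ∂μ := (lintegral_const_mul _ (hfm n).enorm).symm
      _ ≤ _ := by
        refine lintegral_mono_ae ?_
        filter_upwards [hac.ae_le hSfin] with z hz
        rw [hFe z hz]
        have h := ENNReal.le_tsum (f := fun n => (2:ℝ≥0∞)⁻¹ ^ n * (a n)⁻¹ * ‖f n z‖ₑ ^ p) n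
        refine le_trans (le_of_eq ?_) (ENNReal.rpow_le_rpow h hp'.le)
        rw [ENNReal.mul_rpow_of_nonneg _ _ hp'.le, ENNReal.mul_rpow_of_nonneg _ _ hp'.le,
          ← ENNReal.rpow_mul, mul_one_div_cancel hp.ne', ENNReal.rpow_one, ENNReal.inv_rpow]
  obtain ⟨n, hn⟩ := ENNReal.exists_nat_gt hM.ne
  exact absurd (hge n) (not_le.2 hn)

theorem div_lt_top_iff_aux {x P : ℝ≥0∞} (h0 : P ≠ 0) (ht : P ≠ ⊤) : x / P < ⊤ ↔ x < ⊤ := by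
  refine ⟨fun h => ?_, fun h => ENNReal.div_lt_top h.ne h0⟩
  rw [← ENNReal.mul_div_cancel (a := P) (b := x) h0 ht]
  exact ENNReal.mul_lt_top ht.lt_top h

theorem lint_eq {p : ℝ} {w : ℝ → ℝ} (hw : IsRadialWeight w) (hp : 0 ≤ p) (f : ℂ → ℂ)
    (hf : Measurable f) :
    ∫⁻ z in ball (0:ℂ) 1, ENNReal.ofReal (‖f z‖ ^ p * w ‖z‖) =
      ∫⁻ z, ‖f z‖ₑ ^ p ∂((volume.restrict (ball (0:ℂ) 1)).withDensity
        fun z => ENNReal.ofReal (w ‖z‖)) := by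
  have hm : AEMeasurable (fun z : ℂ => ENNReal.ofReal (w ‖z‖)) (volume.restrict (ball (0:ℂ) 1)) := by
    have := hw.2.1.aestronglyMeasurable.comp_quasiMeasurePreserving qmp_norm
    exact this.aemeasurable.ennreal_ofReal
  rw [lintegral_withDensity_eq_lintegral_mul₀ hm (hf.enorm.pow_const p).aemeasurable]
  refine lintegral_congr fun z => ?_
  rw [ENNReal.ofReal_mul (by positivity), Pi.mul_apply, mul_comm,
    ← ENNReal.ofReal_rpow_of_nonneg (norm_nonneg _) hp, ofReal_norm]

theorem Lp_embeds_in_L1 (p : ℝ) (hp : 1 < p) (w v : ℝ → ℝ)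
    (hw : IsRadialWeight w) (hv : IsRadialWeight v)
    (hconv : ∀ f : ℂ → ℂ, Measurable f → LpC p v f < ⊤ →
      ∀ᵐ z ∂(volume.restrict (Metric.ball (0:ℂ) 1)),
        (∫⁻ ζ in Metric.ball (0:ℂ) 1, ENNReal.ofReal (‖f ζ‖ * ‖Bker w z ζ‖ * w ‖ζ‖)) < ⊤) :
    (∀ f : ℂ → ℂ, Measurable f → LpC p v f < ⊤ → L1w w f < ⊤) ∧
      ∃ C > (0:ℝ), ∀ f : ℂ → ℂ, Measurable f → LpC p v f < ⊤ →
        L1w w f ≤ ENNReal.ofReal C * LpC p v f := by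
  have hp0 : 0 < p := by linarith
  have hp' : 0 < 1 / p := by positivity
  set P : ℝ≥0∞ := ENNReal.ofReal Real.pi with hP
  have hP0 : P ≠ 0 := by simp [hP, Real.pi_pos]
  have hPt : P ≠ ⊤ := ENNReal.ofReal_ne_top
  set μ := (volume.restrict (ball (0:ℂ) 1)).withDensity fun z => ENNReal.ofReal (w ‖z‖) with hμ
  set ν := (volume.restrict (ball (0:ℂ) 1)).withDensity fun z => ENNReal.ofReal (v ‖z‖) with hν
  have hLp : ∀ f : ℂ → ℂ, Measurable f → LpC p v f = ((∫⁻ z, ‖f z‖ₑ ^ p ∂ν) / P) ^ (1 / p) := by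
    intro f hf
    rw [LpC, lint_eq hv hp0.le f hf]
  have hL1 : ∀ f : ℂ → ℂ, Measurable f → L1w w f = (∫⁻ z, ‖f z‖ₑ ∂μ) / P := by
    intro f hf
    have := lint_eq hw zero_le_one f hf
    simp only [Real.rpow_one, ENNReal.rpow_one] at this
    rw [L1w, this]
  have hiff : ∀ f : ℂ → ℂ, Measurable f → (LpC p v f < ⊤ ↔ ∫⁻ z, ‖f z‖ₑ ^ p ∂ν < ⊤) := by
    intro f hf
    rw [hLp f hf, ENNReal.rpow_lt_top_iff_of_pos hp', div_lt_top_iff_aux hP0 hPt]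
  have H : ∀ f : ℂ → ℂ, Measurable f → ∫⁻ z, ‖f z‖ₑ ^ p ∂ν < ⊤ → ∫⁻ z, ‖f z‖ₑ ∂μ < ⊤ := by
    intro f hf hfi
    obtain ⟨ε, hε, hε1, c, hc, hB⟩ := Bker_lower hw
    have hae := hconv f hf ((hiff f hf).2 hfi)
    have hae2 := ae_restrict_of_ae_restrict_of_subset (ball_subset_ball hε1) hae
    have hne : volume.restrict (ball (0:ℂ) ε) ≠ 0 := by
      rw [Ne, Measure.restrict_eq_zero]
      exact (measure_ball_pos volume _ hε).ne'
    have : (ae (volume.restrict (ball (0:ℂ) ε))).NeBot := ae_neBot.2 hne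
    obtain ⟨z, hz, hzε⟩ := (hae2.and (ae_restrict_mem measurableSet_ball)).exists
    have h1 := lint_eq hw zero_le_one f hf
    simp only [Real.rpow_one, ENNReal.rpow_one] at h1
    rw [hμ, ← h1]
    have h2 : ENNReal.ofReal c * ∫⁻ ζ in ball (0:ℂ) 1, ENNReal.ofReal (‖f ζ‖ * w ‖ζ‖) < ⊤ := by
      rw [← lintegral_const_mul' _ _ ENNReal.ofReal_ne_top]
      refine lt_of_le_of_lt (setLIntegral_mono' measurableSet_ball fun ζ hζ => ?_) hz
      have hζ' : ‖ζ‖ < 1 := by simpa using hζ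
      have hz' : ‖z‖ < ε := by simpa using hzε
      rw [← ENNReal.ofReal_mul hc.le]
      refine ENNReal.ofReal_le_ofReal ?_
      have hw0 := hw.1 ‖ζ‖ ⟨norm_nonneg _, hζ'⟩
      have := mul_le_mul_of_nonneg_right (hB z ζ hz' hζ') (mul_nonneg (norm_nonneg (f ζ)) hw0)
      linarith
    by_contra hcon
    rw [not_lt, top_le_iff] at hcon
    rw [hcon, ENNReal.mul_top (by simpa using hc)] at h2
    exact lt_irrefl _ h2
  have hat : ∀ x, μ {x} = 0 := fun x =>
    ((withDensity_absolutelyContinuous _ _).trans Measure.absolutelyContinuous_restrict)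
      (measure_singleton x)
  obtain ⟨C, hC, hCb⟩ := bdd_of_embed (ac_of_embed hat hp0 H) hp0 H
  refine ⟨fun f hf hfi => ?_, (C * P ^ (1/p) / P).toReal + 1, by positivity, fun f hf hfi => ?_⟩
  · rw [hL1 f hf, div_lt_top_iff_aux hP0 hPt]
    exact H f hf ((hiff f hf).1 hfi)
  · have hK : C * P ^ (1/p) / P ≠ ⊤ := by
      refine ENNReal.div_ne_top (ENNReal.mul_ne_top hC.ne ?_) hP0
      exact ENNReal.rpow_ne_top_of_nonneg hp'.le hPt
    have hle : C * P ^ (1/p) / P ≤ ENNReal.ofReal ((C * P ^ (1/p) / P).toReal + 1) := by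
      conv_lhs => rw [← ENNReal.ofReal_toReal hK]
      exact ENNReal.ofReal_le_ofReal (by linarith)
    refine le_trans ?_ (mul_le_mul_left hle _)
    rw [hL1 f hf, hLp f hf]
    have hb := hCb f hf ((hiff f hf).1 hfi)
    set I := ∫⁻ z, ‖f z‖ₑ ^ p ∂ν
    calc _ ≤ C * I ^ (1/p) / P := by gcongr
      _ = _ := by
        have : I ^ (1/p) = P ^ (1/p) * (I / P) ^ (1/p) := by
          rw [← ENNReal.mul_rpow_of_nonneg _ _ hp'.le, ENNReal.mul_div_cancel hP0 hPt]
        rw [this, div_eq_mul_inv, div_eq_mul_inv (C * P ^ (1/p))]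
        ring

end
end
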